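/- arXiv:2010.11658 — 2 statements merged into one kernel-verified Lean document; each statement's English description precedes it below -/
import Mathlib

section
/- Let ℓ ≥ 1, let R ⊆ X^ℓ × Y^ℓ be a relation, and let k, q ≥ 1. Consider any k-parallel q-query quantum oracle algorithm (d, ψ₀, U_0, …, U_q) together with readout functions out_X : B → X^ℓ and out_Y : B → Y^ℓ such that the components of out_X(b) are pairwise distinct for every b ∈ B. Define p := M^{−|X|} · Σ_{H : X→Y} Σ_{b ∈ B with out_Y(b) = H(out_X(b)) (componentwise) and (out_X(b), out_Y(b)) ∈ R} |⟨e_b, ψ_H⟩|², and p' := Σ over all pairs (b, D) ∈ B × DB with D(out_X(b)_i) = out_Y(b)_i for all 1 ≤ i ≤ ℓ and (out_X(b), out_Y(b)) ∈ R, of |⟨e_b ⊗ e_D, Ψ⟩|², where Ψ is the compressed final state. Then √p ≤ √p' + √(ℓ/M). -/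
noncomputable section

/- `Ȳ = Y ∪ {⊥}` is modeled by `Option Y` (`⊥ = none`), databases `DB` by `X → Option Y`,
and all `ℓ²`-spaces by `EuclideanSpace ℂ _` with orthonormal basis `EuclideanSpace.single _ 1`. -/

/-- matrix (in the computational basis) of the single-register self-adjoint unitary `Comp` -/
def compMat (Y : Type*) [Fintype Y] [DecidableEq Y] :
    Matrix (Option Y) (Option Y) ℂ :=
  Matrix.of fun u v =>
    match u, v with
    | none, none => 0
    | some _, none => ((Real.sqrt (Fintype.card Y) : ℝ) : ℂ)⁻¹
    | none, some _ => ((Real.sqrt (Fintype.card Y) : ℝ) : ℂ)⁻¹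
    | some a, some b => (if a = b then (1 : ℂ) else 0) - ((Fintype.card Y : ℕ) : ℂ)⁻¹

/-- matrix of `Comp_DB`: `Comp` applied at every database register -/
def compDBMat (X Y : Type*) [Fintype X] [Fintype Y] [DecidableEq Y] :
    Matrix (X → Option Y) (X → Option Y) ℂ :=
  Matrix.of fun D' D => ∏ a : X, compMat Y (D' a) (D a)

/-- the basis permutation underlying `Õ`:
`(x, y, w, D) ↦ (x, y', w, D)` with `y'_i = y_i + D (x_i)` whenever `D (x_i) ∈ Y`,
and `y'_i = y_i` when `D (x_i) = ⊥` -/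
def shiftIdx {X Y : Type*} [AddCommGroup Y] {k d : ℕ}
    (p : ((Fin k → X) × (Fin k → Y) × Fin d) × (X → Option Y)) :
    ((Fin k → X) × (Fin k → Y) × Fin d) × (X → Option Y) :=
  ⟨⟨p.1.1, fun i => (p.2 (p.1.1 i)).elim (p.1.2.1 i) (fun v => p.1.2.1 i + v), p.1.2.2⟩,
    p.2⟩

/-- matrix of the compressed oracle `cO = (1_W ⊗ Comp_DB) ∘ Õ ∘ (1_W ⊗ Comp_DB)` -/
def cOMat (X Y : Type*) [Fintype X] [DecidableEq X] [Fintype Y] [DecidableEq Y]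
    [AddCommGroup Y] (k d : ℕ) :
    Matrix (((Fin k → X) × (Fin k → Y) × Fin d) × (X → Option Y))
           (((Fin k → X) × (Fin k → Y) × Fin d) × (X → Option Y)) ℂ := by
  classical
  exact (Matrix.of fun p' p => if p'.1 = p.1 then compDBMat X Y p'.2 p.2 else 0)
      * (Matrix.of fun p' p => if p' = shiftIdx p then 1 else 0)
      * (Matrix.of fun p' p => if p'.1 = p.1 then compDBMat X Y p'.2 p.2 else 0)

/-- matrix of an operator on `ℓ²` -/
def matOf {ι : Type*} [Fintype ι] [DecidableEq ι]
    (A : EuclideanSpace ℂ ι →L[ℂ] EuclideanSpace ℂ ι) : Matrix ι ι ℂ :=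
  Matrix.of fun i j =>
    inner (𝕜 := ℂ) (EuclideanSpace.single i 1) (A (EuclideanSpace.single j 1))

/-- matrix of `A ⊗ 1`: an operator `A` on `W`, extended by the identity on the `DB` factor -/
def uExtMat (X Y : Type*) [Fintype X] [DecidableEq X] [Fintype Y] [DecidableEq Y]
    (k d : ℕ)
    (A : EuclideanSpace ℂ ((Fin k → X) × (Fin k → Y) × Fin d) →L[ℂ]
         EuclideanSpace ℂ ((Fin k → X) × (Fin k → Y) × Fin d)) :
    Matrix (((Fin k → X) × (Fin k → Y) × Fin d) × (X → Option Y))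
           (((Fin k → X) × (Fin k → Y) × Fin d) × (X → Option Y)) ℂ := by
  classical
  exact Matrix.of fun p' p => if p'.2 = p.2 then matOf A p'.1 p.1 else 0

/-- the (continuous linear) operator on `ℓ²` given by a matrix -/
def toOp {ι : Type*} [Fintype ι] [DecidableEq ι] (m : Matrix ι ι ℂ) :
    EuclideanSpace ℂ ι →L[ℂ] EuclideanSpace ℂ ι :=
  LinearMap.toContinuousLinearMap (Matrix.toEuclideanLin m)

/-- `ψ₀ ⊗ e_⊥̄`, where `⊥̄` is the constant-`⊥` database -/
def tensorBot {B X Y : Type*} [Fintype B] [Fintype X] [Fintype Y]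
    (ψ0 : EuclideanSpace ℂ B) :
    EuclideanSpace ℂ (B × (X → Option Y)) := by
  classical
  exact (EuclideanSpace.equiv (B × (X → Option Y)) ℂ).symm
    (fun p => if p.2 = (fun _ => none) then (EuclideanSpace.equiv B ℂ) ψ0 p.1 else 0)

/-- `runOp Us O q = Us q ∘ O ∘ Us (q-1) ∘ O ∘ ⋯ ∘ Us 1 ∘ O ∘ Us 0`:
the evolution of a `q`-query oracle algorithm with unitaries `Us` and oracle `O` -/
def runOp {V : Type*} [NormedAddCommGroup V] [NormedSpace ℂ V]
    (Us : ℕ → V →L[ℂ] V) (O : V →L[ℂ] V) : ℕ → (V →L[ℂ] V)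
  | 0 => Us 0
  | n + 1 => (Us (n + 1)).comp (O.comp (runOp Us O n))

/-!
Purify the random oracle: run the algorithm on the uniform superposition `Φ` of all `H : X → Y`.
Since `Comp_DB` maps `e_⊥̄` to this superposition, squares to `1` and commutes with the `U_i`, the
compressed state is `Ψ = (1 ⊗ Comp_DB) Φ`. Hence `√p` and `√p'` are the norms of one and the same
projection `E` (recording the claimed values) applied to `Φ` and to `(1 ⊗ Comp_DB) Φ`.

`Comp` on the registers outside the `ℓ` read-out ones commutes with `E` and does not change norms.
As `Φ` lives on databases without `⊥`, with projection `V`, it remains to compare `P = E V` with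
`B = E Comp V`, where `Comp` acts on the `ℓ` read-out registers only. Registerwise,
`B P = B B* = c P` with `c = (1 - 1/M) ^ ℓ`, so `(P - B) (P - B)* = (1 - c) P`, and therefore
`‖P - B‖ ≤ √(1 - c) ≤ √(ℓ/M)` by Bernoulli's inequality.
-/

section CStarRing

variable {A : Type*} [NormedRing A] [StarRing A] [CStarRing A] [NormedSpace ℝ A] [StarModule ℝ A]

lemma norm_sub_le_sqrt_one_sub {p b : A} {c : ℝ} (hp : IsStarProjection p) (hc : c ≤ 1)
    (hbp : b * p = c • p) (hbb : b * star b = c • p) : ‖p - b‖ ≤ √(1 - c) := by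
  have hpb : p * star b = c • p := by
    simpa [hp.isSelfAdjoint.star_eq] using congrArg star hbp
  have hgram : (p - b) * star (p - b) = (1 - c) • p := by
    rw [star_sub, hp.isSelfAdjoint.star_eq, mul_sub, sub_mul, sub_mul, hp.isIdempotentElem.eq,
      hbp, hpb, hbb, sub_self, sub_zero, sub_smul, one_smul]
  apply Real.le_sqrt_of_sq_le
  calc ‖p - b‖ ^ 2 = ‖(1 - c) • p‖ := by rw [sq, ← CStarRing.norm_self_mul_star, hgram]
    _ = (1 - c) * ‖p‖ := norm_smul_of_nonneg (sub_nonneg.2 hc) p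
    _ ≤ 1 - c := mul_le_of_le_one_right (sub_nonneg.2 hc) hp.norm_le

end CStarRing

section registerTensor

variable {X ι R : Type*} [Fintype X] [DecidableEq X] [Fintype ι] [DecidableEq ι] [CommRing R]
  [StarRing R]

/-- The tensor product `⨂ a, m a` of square matrices, one for each register `a : X`, as a
multiplicative and `*`-preserving map, so that identities can be checked register by register. -/
def registerTensor : (X → Matrix ι ι R) →⋆* Matrix (X → ι) (X → ι) R where
  toFun m := Matrix.of fun D' D => ∏ a, m a (D' a) (D a)
  map_one' := by
    ext D' D
    simp only [Matrix.of_apply, Pi.one_apply, Matrix.one_apply, Finset.prod_ite_zero]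
    simp [funext_iff]
  map_mul' m n := by
    ext D' D
    simp only [Matrix.mul_apply, Matrix.of_apply, Pi.mul_apply, ← Finset.prod_mul_distrib]
    rw [Finset.prod_univ_sum, Fintype.piFinset_univ]
  map_star' m := by
    ext D' D
    simp [Matrix.star_apply]

lemma registerTensor_apply (m : X → Matrix ι ι R) (D' D : X → ι) :
    registerTensor m D' D = ∏ a, m a (D' a) (D a) := rfl

lemma registerTensor_smul (c : X → R) (m : X → Matrix ι ι R) :
    registerTensor (c • m) = (∏ a, c a) • registerTensor m := by
  ext D' D
  simp [registerTensor_apply, Finset.prod_mul_distrib]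

end registerTensor

section eventProj

variable {ι : Type*} [DecidableEq ι]

open scoped Classical in
/-- The orthogonal projection onto the span of the basis vectors `e_i` with `i ∈ E`, that is, the
projection describing the event `E` of a measurement in the computational basis. -/
def eventProj (E : Set ι) : Matrix ι ι ℂ :=
  Matrix.diagonal fun i => if i ∈ E then 1 else 0

lemma eventProj_univ : eventProj (Set.univ : Set ι) = 1 := by
  simp [eventProj]

lemma eventProj_empty : eventProj (∅ : Set ι) = 0 := by
  simp [eventProj]

lemma eventProj_singleton (i : ι) : eventProj {i} = Matrix.single i i 1 := by
  rw [eventProj, ← Matrix.diagonal_single]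
  congr 1
  ext j
  simp [Pi.single_apply]

variable [Fintype ι]

lemma eventProj_mul_eventProj (E F : Set ι) :
    eventProj E * eventProj F = eventProj (E ∩ F) := by
  rw [eventProj, eventProj, eventProj, Matrix.diagonal_mul_diagonal]
  congr 1
  ext i
  by_cases hE : i ∈ E <;> by_cases hF : i ∈ F <;> simp [hE, hF]

lemma isStarProjection_eventProj (E : Set ι) : IsStarProjection (eventProj E) where
  isIdempotentElem := by
    rw [IsIdempotentElem, eventProj_mul_eventProj, Set.inter_self]
  isSelfAdjoint := by
    rw [IsSelfAdjoint, eventProj, Matrix.star_eq_conjTranspose, Matrix.diagonal_conjTranspose]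
    congr 1
    ext i
    simp [apply_ite]

lemma eventProj_singleton_mul_mul (i : ι) (m : Matrix ι ι ℂ) :
    eventProj {i} * m * eventProj {i} = m i i • eventProj {i} := by
  simp [eventProj_singleton, Matrix.single_mul_mul_single, Matrix.smul_single]

lemma registerTensor_eventProj {X : Type*} [Fintype X] [DecidableEq X] (S : Finset X)
    (E : X → Set ι) :
    registerTensor (S.piecewise (fun a => eventProj (E a)) 1) = eventProj ((S : Set X).pi E) := by
  classical
  have hfactor (a : X) (u u' : ι) : S.piecewise (fun a => eventProj (E a)) 1 a u u' =
      if u = u' ∧ (a ∈ S → u ∈ E a) then 1 else 0 := by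
    by_cases ha : a ∈ S <;>
      simp [ha, eventProj, Matrix.diagonal_apply, Matrix.one_apply, ite_and]
  ext D' D
  simp only [registerTensor_apply, hfactor, Finset.prod_ite_zero, Finset.prod_const_one]
  simp [eventProj, Matrix.diagonal_apply, ← ite_and, funext_iff, forall_and, Set.mem_pi]

end eventProj

section toOp

variable {ι : Type*} [Fintype ι] [DecidableEq ι]

lemma toOp_eq_toEuclideanCLM (m : Matrix ι ι ℂ) : toOp m = Matrix.toEuclideanCLM (𝕜 := ℂ) m :=
  rfl

lemma toOp_apply (m : Matrix ι ι ℂ) (v : EuclideanSpace ℂ ι) (i : ι) :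
    toOp m v i = ∑ j, m i j * v j :=
  rfl

lemma toOp_zero : toOp (0 : Matrix ι ι ℂ) = 0 :=
  map_zero (Matrix.toEuclideanCLM (𝕜 := ℂ))

lemma toOp_one : toOp (1 : Matrix ι ι ℂ) = 1 :=
  map_one (Matrix.toEuclideanCLM (𝕜 := ℂ))

lemma toOp_mul (m n : Matrix ι ι ℂ) : toOp (m * n) = toOp m * toOp n :=
  map_mul (Matrix.toEuclideanCLM (𝕜 := ℂ)) m n

lemma toOp_matOf (A : EuclideanSpace ℂ ι →L[ℂ] EuclideanSpace ℂ ι) : toOp (matOf A) = A := by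
  refine ContinuousLinearMap.coe_injective
    ((EuclideanSpace.basisFun ι ℂ).toBasis.ext fun j => ?_)
  ext i
  simp [toOp_apply, matOf, EuclideanSpace.inner_single_left]

lemma toOp_eventProj_apply (E : Set ι) [DecidablePred (· ∈ E)] (v : EuclideanSpace ℂ ι) (i : ι) :
    toOp (eventProj E) v i = if i ∈ E then v i else 0 := by
  simp [toOp_apply, eventProj, Matrix.diagonal_apply]

lemma norm_toOp_eventProj_sq (E : Set ι) [DecidablePred (· ∈ E)] (v : EuclideanSpace ℂ ι) :
    ‖toOp (eventProj E) v‖ ^ 2 = ∑ i, if i ∈ E then ‖v i‖ ^ 2 else 0 := by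
  rw [EuclideanSpace.norm_sq_eq]
  refine Finset.sum_congr rfl fun i _ => ?_
  rw [toOp_eventProj_apply]
  split_ifs <;> simp

/-- The operator `⨂ a, m a` on the `ℓ²`-space of databases. -/
def registerOp {X : Type*} [Fintype X] [DecidableEq X] :
    (X → Matrix ι ι ℂ) →⋆* (EuclideanSpace ℂ (X → ι) →L[ℂ] EuclideanSpace ℂ (X → ι)) where
  toFun m := toOp (registerTensor m)
  map_one' := by rw [map_one, toOp_one]
  map_mul' m n := by rw [map_mul, toOp_mul]
  map_star' m := by rw [map_star, toOp_eq_toEuclideanCLM, map_star, toOp_eq_toEuclideanCLM]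

lemma registerOp_apply {X : Type*} [Fintype X] [DecidableEq X] (m : X → Matrix ι ι ℂ) :
    registerOp m = toOp (registerTensor m) := rfl

end toOp

lemma inv_sqrt_mul_inv_sqrt_natCast (n : ℕ) : ((√n : ℝ) : ℂ)⁻¹ * ((√n : ℝ) : ℂ)⁻¹ = (n : ℂ)⁻¹ := by
  rw [← mul_inv, ← Complex.ofReal_mul, Real.mul_self_sqrt n.cast_nonneg, Complex.ofReal_natCast]

section compMat

variable {Y : Type*} [Fintype Y] [DecidableEq Y]

lemma star_compMat : star (compMat Y) = compMat Y := by
  ext u v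
  rcases u with _ | u <;> rcases v with _ | v <;> simp [compMat, Matrix.star_apply, eq_comm]

lemma compMat_mul_self [Nonempty Y] : compMat Y * compMat Y = 1 := by
  have hM : (Fintype.card Y : ℂ) ≠ 0 := Nat.cast_ne_zero.2 Fintype.card_ne_zero
  have h := inv_sqrt_mul_inv_sqrt_natCast (Fintype.card Y)
  ext u v
  rw [Matrix.mul_apply, Fintype.sum_option]
  rcases u with _ | u <;> rcases v with _ | v
  · simp [compMat, h, hM]
  · simp only [compMat, Matrix.of_apply, zero_mul, zero_add, mul_sub, Finset.sum_sub_distrib]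
    simp [mul_left_comm (Fintype.card Y : ℂ), hM]
  · simp [compMat, sub_mul, hM]
  · simp only [compMat, Matrix.of_apply, h, sub_mul, mul_sub, Finset.sum_sub_distrib]
    simp [Matrix.one_apply, hM]

lemma eventProj_mul_compMat_mul_eventProj (y : Y) :
    eventProj {some y} * compMat Y * eventProj {some y} =
      (1 - (Fintype.card Y : ℂ)⁻¹) • eventProj {some y} := by
  simp [eventProj_singleton_mul_mul, compMat]

lemma eventProj_mul_compMat_mul_eventProj_compl_none [Nonempty Y] (y : Y) :
    eventProj {some y} * (compMat Y * eventProj {none}ᶜ * compMat Y) * eventProj {some y} =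
      (1 - (Fintype.card Y : ℂ)⁻¹) • eventProj {some y} := by
  have h := congrFun₂ (compMat_mul_self (Y := Y)) (some y) (some y)
  rw [Matrix.mul_apply, Fintype.sum_option, Matrix.one_apply_eq] at h
  rw [eventProj_singleton_mul_mul, Matrix.mul_apply, Fintype.sum_option, ← h,
    ← inv_sqrt_mul_inv_sqrt_natCast]
  simp [compMat, eventProj, Matrix.mul_diagonal]

lemma eventProj_some_mul_eventProj_compl_none (y : Y) :
    eventProj {some y} * eventProj {none}ᶜ = eventProj {some y} := by
  rw [eventProj_mul_eventProj, Set.inter_eq_left.2 (by simp)]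

lemma eventProj_compl_none_mul_eventProj_some (y : Y) :
    eventProj {none}ᶜ * eventProj {some y} = eventProj {some y} := by
  rw [eventProj_mul_eventProj, Set.inter_eq_right.2 (by simp)]

end compMat

section overlap

variable {X Y : Type*} [Fintype Y] [DecidableEq X]

/-- The registerwise overlap of a recorded value in `Y` with its image under `partialComp Y S`. -/
def overlap (Y : Type*) [Fintype Y] (S : Finset X) : X → ℂ :=
  S.piecewise (fun _ => 1 - (Fintype.card Y : ℂ)⁻¹) 1

lemma prod_overlap [Fintype X] (S : Finset X) :
    ∏ a, overlap Y S a = (1 - (Fintype.card Y : ℂ)⁻¹) ^ S.card := by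
  simp [overlap, Finset.prod_piecewise]

end overlap

section partialComp

variable {X Y : Type*} [DecidableEq X] [Fintype Y] [DecidableEq Y]

/-- The registerwise factors of the projection onto the databases that record the values of `f`
on `S`. -/
def recordProj (S : Finset X) (f : X → Y) : X → Matrix (Option Y) (Option Y) ℂ :=
  S.piecewise (fun a => eventProj {some (f a)}) 1

/-- The registerwise factors of the projection onto the databases without `⊥`. -/
def totalProj (X Y : Type*) [DecidableEq Y] : X → Matrix (Option Y) (Option Y) ℂ :=
  fun _ => eventProj {none}ᶜ

/-- `Comp` on the registers in `S`, and the identity on the others. -/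
def partialComp (Y : Type*) [Fintype Y] [DecidableEq Y] (S : Finset X) :
    X → Matrix (Option Y) (Option Y) ℂ :=
  S.piecewise (fun _ => compMat Y) 1

lemma partialComp_compl_mul_partialComp [Fintype X] (S : Finset X) :
    partialComp Y Sᶜ * partialComp Y S = fun _ => compMat Y := by
  ext1 a
  by_cases ha : a ∈ S <;> simp [partialComp, ha]

lemma commute_recordProj_partialComp_compl [Fintype X] (S : Finset X) (f : X → Y) :
    Commute (recordProj S f) (partialComp Y Sᶜ) := by
  ext1 a
  by_cases ha : a ∈ S <;> simp [partialComp, recordProj, ha]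

lemma partialComp_mem_unitary [Nonempty Y] (S : Finset X) :
    partialComp Y S ∈ unitary (X → Matrix (Option Y) (Option Y) ℂ) := by
  have hstar : star (partialComp Y S) = partialComp Y S := by
    ext1 a
    by_cases ha : a ∈ S <;> simp [partialComp, star_compMat, ha]
  have hmul : partialComp Y S * partialComp Y S = 1 := by
    ext1 a
    by_cases ha : a ∈ S <;> simp [partialComp, compMat_mul_self, ha]
  exact Unitary.mem_iff.2 ⟨by rw [hstar, hmul], by rw [hstar, hmul]⟩

lemma recordProj_mul_totalProj (S : Finset X) (f : X → Y) :
    recordProj S f * totalProj X Y =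
      S.piecewise (fun a => eventProj {some (f a)}) (totalProj X Y) := by
  ext1 a
  by_cases ha : a ∈ S <;>
    simp [recordProj, totalProj, ha, eventProj_some_mul_eventProj_compl_none]

lemma isStarProjection_recordProj_mul_totalProj (S : Finset X) (f : X → Y) :
    IsStarProjection (recordProj S f * totalProj X Y) := by
  rw [recordProj_mul_totalProj]
  have h (a : X) : IsStarProjection
      (S.piecewise (fun a => eventProj {some (f a)}) (totalProj X Y) a) := by
    by_cases ha : a ∈ S <;> simp [totalProj, ha, isStarProjection_eventProj]
  exact ⟨funext fun a => (h a).isIdempotentElem, funext fun a => (h a).isSelfAdjoint⟩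

lemma recordProj_mul_partialComp_mul_totalProj (S : Finset X) (f : X → Y) :
    recordProj S f * partialComp Y S * totalProj X Y =
      S.piecewise (fun a => eventProj {some (f a)} * compMat Y * eventProj {none}ᶜ)
        (totalProj X Y) := by
  ext1 a
  by_cases ha : a ∈ S <;> simp [recordProj, partialComp, totalProj, ha]

lemma recordProj_mul_partialComp_mul_totalProj_mul (S : Finset X) (f : X → Y) :
    recordProj S f * partialComp Y S * totalProj X Y * (recordProj S f * totalProj X Y) =
      overlap Y S • (recordProj S f * totalProj X Y) := by
  rw [recordProj_mul_partialComp_mul_totalProj, recordProj_mul_totalProj]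
  ext1 a
  by_cases ha : a ∈ S
  · simp [overlap, ha, mul_assoc, eventProj_compl_none_mul_eventProj_some,
      ← eventProj_mul_compMat_mul_eventProj]
  · simp [overlap, totalProj, ha, eventProj_mul_eventProj]

lemma recordProj_mul_partialComp_mul_totalProj_mul_star [Nonempty Y] (S : Finset X) (f : X → Y) :
    recordProj S f * partialComp Y S * totalProj X Y *
        star (recordProj S f * partialComp Y S * totalProj X Y) =
      overlap Y S • (recordProj S f * totalProj X Y) := by
  have hstar (E : Set (Option Y)) : star (eventProj E) = eventProj E :=
    (isStarProjection_eventProj E).isSelfAdjoint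
  have hidem (E : Set (Option Y)) : eventProj E * eventProj E = eventProj E :=
    (isStarProjection_eventProj E).isIdempotentElem
  rw [recordProj_mul_partialComp_mul_totalProj, recordProj_mul_totalProj]
  ext1 a
  by_cases ha : a ∈ S
  · rw [Pi.mul_apply, Pi.star_apply, Pi.smul_apply', overlap]
    simp only [ha, Finset.piecewise_eq_of_mem]
    rw [star_mul, star_mul, hstar, hstar, star_compMat,
      ← eventProj_mul_compMat_mul_eventProj_compl_none]
    simp only [mul_assoc]
    rw [← mul_assoc (eventProj {none}ᶜ) (eventProj _), hidem]
  · simp [overlap, totalProj, ha, hstar, hidem]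

end partialComp

section recording

variable {X Y : Type*} [Fintype X] [DecidableEq X] [Fintype Y] [DecidableEq Y]

lemma toOp_compDBMat : toOp (compDBMat X Y) = registerOp fun _ => compMat Y := rfl

lemma compDBMat_mul_self [Nonempty Y] : compDBMat X Y * compDBMat X Y = 1 := by
  have h : compDBMat X Y = registerTensor fun _ => compMat Y := rfl
  rw [h, ← map_mul, ← map_one registerTensor]
  exact congrArg _ (funext fun _ => compMat_mul_self)

lemma registerOp_recordProj (S : Finset X) (f : X → Y) :
    registerOp (recordProj S f) = toOp (eventProj ((S : Set X).pi fun a => {some (f a)})) := by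
  rw [registerOp_apply, recordProj, registerTensor_eventProj]

lemma registerOp_totalProj :
    registerOp (totalProj X Y) = toOp (eventProj {D | ∀ a, D a ≠ none}) := by
  have h := registerTensor_eventProj (Finset.univ : Finset X) fun _ => ({none}ᶜ : Set (Option Y))
  rw [Finset.piecewise_univ] at h
  rw [registerOp_apply]
  refine congrArg toOp (h.trans ?_)
  congr 1
  ext D
  simp [Set.mem_pi]

lemma registerOp_overlap_smul (S : Finset X) (m : X → Matrix (Option Y) (Option Y) ℂ) :
    registerOp (overlap Y S • m) =
      (1 - (Fintype.card Y : ℝ)⁻¹) ^ S.card • registerOp m := by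
  rw [registerOp_apply, registerTensor_smul, prod_overlap, toOp_eq_toEuclideanCLM, map_smul]
  trans ((((1 - (Fintype.card Y : ℝ)⁻¹) ^ S.card : ℝ) : ℂ) • registerOp m)
  · push_cast
    rfl
  · ext1 v
    exact Complex.coe_smul (E := EuclideanSpace ℂ (X → Option Y)) _ (registerOp m v)

lemma norm_registerOp_recordProj_compDB [Nonempty Y] (S : Finset X) (f : X → Y)
    (φ : EuclideanSpace ℂ (X → Option Y)) :
    ‖registerOp (recordProj S f) (toOp (compDBMat X Y) φ)‖ =
      ‖registerOp (recordProj S f * partialComp Y S) φ‖ := by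
  rw [toOp_compDBMat, ← partialComp_compl_mul_partialComp S, ← mul_apply_eq_comp,
    ← map_mul, ← mul_assoc, (commute_recordProj_partialComp_compl S f).eq, mul_assoc, map_mul,
    mul_apply_eq_comp]
  exact ContinuousLinearMap.norm_map_of_mem_unitary
    (Unitary.map_mem (registerOp (ι := Option Y)) (partialComp_mem_unitary Sᶜ)) _

lemma one_sub_one_sub_inv_pow_le {M : ℝ} (hM : 1 ≤ M) (n : ℕ) :
    1 - (1 - M⁻¹) ^ n ≤ n / M := by
  have hM' : M⁻¹ ≤ 1 := inv_le_one_of_one_le₀ hM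
  have h := one_add_mul_le_pow (a := -M⁻¹) (by linarith) n
  rw [← sub_eq_add_neg] at h
  rw [div_eq_mul_inv]
  linarith

theorem norm_registerOp_recordProj_sub_le [Nonempty Y] (S : Finset X) (f : X → Y) :
    ‖registerOp (recordProj S f * totalProj X Y) -
      registerOp (recordProj S f * partialComp Y S * totalProj X Y)‖ ≤
        √(S.card / Fintype.card Y) := by
  have hM : (1 : ℝ) ≤ Fintype.card Y := Nat.one_le_cast.2 Fintype.card_pos
  have hoverlap : (1 - (Fintype.card Y : ℝ)⁻¹) ^ S.card ≤ 1 :=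
    pow_le_one₀ (sub_nonneg.2 (inv_le_one_of_one_le₀ hM)) (by simp)
  refine (norm_sub_le_sqrt_one_sub
    ((isStarProjection_recordProj_mul_totalProj S f).map registerOp) hoverlap ?_ ?_).trans
    (Real.sqrt_le_sqrt (one_sub_one_sub_inv_pow_le hM _))
  · rw [← map_mul, recordProj_mul_partialComp_mul_totalProj_mul, registerOp_overlap_smul]
  · rw [← map_star, ← map_mul, recordProj_mul_partialComp_mul_totalProj_mul_star,
      registerOp_overlap_smul]

theorem norm_registerOp_recordProj_le [Nonempty Y] (S : Finset X) (f : X → Y)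
    {φ : EuclideanSpace ℂ (X → Option Y)} (hφ : registerOp (totalProj X Y) φ = φ) :
    ‖registerOp (recordProj S f) φ‖ ≤
      ‖registerOp (recordProj S f) (toOp (compDBMat X Y) φ)‖ +
        √(S.card / Fintype.card Y) * ‖φ‖ := by
  have happly (m : X → Matrix (Option Y) (Option Y) ℂ) :
      registerOp m φ = registerOp (m * totalProj X Y) φ := by
    rw [map_mul, mul_apply_eq_comp, hφ]
  rw [norm_registerOp_recordProj_compDB, happly (recordProj S f),
    happly (recordProj S f * partialComp Y S)]
  grw [← norm_registerOp_recordProj_sub_le S f]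
  refine (norm_le_insert' _ _).trans (add_le_add_right ?_ _)
  rw [← sub_apply]
  exact ContinuousLinearMap.le_opNorm _ φ

end recording

section tensorSingle

variable {ι κ : Type*} [DecidableEq κ]

/-- The map `v ↦ v ⊗ e_k`. -/
def tensorSingle (k : κ) :
    EuclideanSpace ℂ ι →ₗ[ℂ] EuclideanSpace ℂ (ι × κ) where
  toFun v := WithLp.toLp 2 fun p => if p.2 = k then v p.1 else 0
  map_add' v w := by
    ext p
    by_cases h : p.2 = k <;> simp [h]
  map_smul' c v := by
    ext p
    by_cases h : p.2 = k <;> simp [h]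

lemma tensorSingle_apply (k : κ) (v : EuclideanSpace ℂ ι) (p : ι × κ) :
    tensorSingle k v p = if p.2 = k then v p.1 else 0 := rfl

variable [DecidableEq ι]

lemma tensorSingle_single (i : ι) (k : κ) :
    tensorSingle k (EuclideanSpace.single i 1) = EuclideanSpace.single (i, k) 1 := by
  ext p
  simp [tensorSingle_apply, Prod.ext_iff, ← ite_and, and_comm]

variable [Fintype ι] [Fintype κ]

open scoped Kronecker

lemma toOp_kronecker_tensorSingle (A : Matrix ι ι ℂ) (C : Matrix κ κ ℂ) (k : κ)
    (v : EuclideanSpace ℂ ι) :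
    toOp (A ⊗ₖ C) (tensorSingle k v) = ∑ k', C k' k • tensorSingle k' (toOp A v) := by
  ext p
  suffices ∑ i, A p.1 i * C p.2 k * v i = C p.2 k * ∑ i, A p.1 i * v i by
    simpa [toOp_apply, tensorSingle_apply, Fintype.sum_prod_type]
  rw [Finset.mul_sum]
  exact Finset.sum_congr rfl fun _ _ => by ring

lemma toOp_kronecker_one_tensorSingle (A : Matrix ι ι ℂ) (k : κ) (v : EuclideanSpace ℂ ι) :
    toOp (A ⊗ₖ (1 : Matrix κ κ ℂ)) (tensorSingle k v) = tensorSingle k (toOp A v) := by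
  simp [toOp_kronecker_tensorSingle, Matrix.one_apply]

end tensorSingle

section basisMapMat

variable {ι : Type*} [DecidableEq ι]

/-- The matrix of the operator with `e_i ↦ e_{g i}`. -/
def basisMapMat (g : ι → ι) : Matrix ι ι ℂ :=
  Matrix.of fun i j => if i = g j then 1 else 0

variable [Fintype ι]

lemma toOp_basisMapMat_single (g : ι → ι) (i : ι) :
    toOp (basisMapMat g) (EuclideanSpace.single i 1) = EuclideanSpace.single (g i) 1 := by
  ext j
  simp [toOp_apply, basisMapMat]

lemma norm_map_of_map_single {A : EuclideanSpace ℂ ι →L[ℂ] EuclideanSpace ℂ ι} {g : ι → ι}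
    (hg : Function.Injective g)
    (hA : ∀ i, A (EuclideanSpace.single i 1) = EuclideanSpace.single (g i) 1)
    (v : EuclideanSpace ℂ ι) : ‖A v‖ = ‖v‖ := by
  let e := EuclideanSpace.basisFun ι ℂ
  have hAe : (A : EuclideanSpace ℂ ι →ₗ[ℂ] EuclideanSpace ℂ ι) ∘ e.toBasis = e ∘ g := by
    ext1 i
    simpa [e] using hA i
  exact (LinearMap.isometryOfOrthonormal (A : EuclideanSpace ℂ ι →ₗ[ℂ] EuclideanSpace ℂ ι)
    (by rw [e.coe_toBasis]; exact e.orthonormal)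
    (by rw [hAe]; exact e.orthonormal.comp g hg)).norm_map v

end basisMapMat

section slice

variable {ι κ : Type*}

/-- The vector `⟨e_i| ⊗ 1` applied to `u`. -/
def slice (u : EuclideanSpace ℂ (ι × κ)) (i : ι) : EuclideanSpace ℂ κ :=
  WithLp.toLp 2 fun k => u (i, k)

lemma slice_apply (u : EuclideanSpace ℂ (ι × κ)) (i : ι) (k : κ) : slice u i k = u (i, k) := rfl

variable [Fintype ι] [Fintype κ]

lemma sum_norm_slice_sq (u : EuclideanSpace ℂ (ι × κ)) : ∑ i, ‖slice u i‖ ^ 2 = ‖u‖ ^ 2 := by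
  simp only [EuclideanSpace.norm_sq_eq, Fintype.sum_prod_type, slice_apply]

lemma norm_le_of_norm_slice_le {u v w : EuclideanSpace ℂ (ι × κ)} {c : ℝ} (hc : 0 ≤ c)
    (h : ∀ i, ‖slice u i‖ ≤ ‖slice v i‖ + c * ‖slice w i‖) : ‖u‖ ≤ ‖v‖ + c * ‖w‖ := by
  let N (u : EuclideanSpace ℂ (ι × κ)) : EuclideanSpace ℝ ι := WithLp.toLp 2 fun i => ‖slice u i‖
  have hN (u : EuclideanSpace ℂ (ι × κ)) : ‖N u‖ = ‖u‖ := by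
    rw [← sq_eq_sq₀ (norm_nonneg _) (norm_nonneg _), ← sum_norm_slice_sq u,
      EuclideanSpace.norm_sq_eq]
    simp [N]
  have hmono : ‖N u‖ ≤ ‖N v + c • N w‖ := by
    rw [EuclideanSpace.norm_eq, EuclideanSpace.norm_eq]
    gcongr with i
    rw [Real.norm_of_nonneg (norm_nonneg _)]
    exact (h i).trans (le_abs_self _)
  calc ‖u‖ = ‖N u‖ := (hN u).symm
    _ ≤ ‖N v‖ + ‖c • N w‖ := hmono.trans (norm_add_le _ _)
    _ = ‖v‖ + c * ‖w‖ := by rw [norm_smul_of_nonneg hc, hN, hN]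

variable [DecidableEq ι] [DecidableEq κ]

lemma slice_toOp_eventProj (E : Set (ι × κ)) (u : EuclideanSpace ℂ (ι × κ)) (i : ι) :
    slice (toOp (eventProj E) u) i = toOp (eventProj (Prod.mk i ⁻¹' E)) (slice u i) := by
  classical
  ext k
  simp [slice_apply, toOp_eventProj_apply]

open scoped Kronecker in
lemma slice_toOp_one_kronecker (C : Matrix κ κ ℂ) (u : EuclideanSpace ℂ (ι × κ)) (i : ι) :
    slice (toOp ((1 : Matrix ι ι ℂ) ⊗ₖ C) u) i = toOp C (slice u i) := by
  ext k
  simp [slice_apply, toOp_apply, Fintype.sum_prod_type, Matrix.one_apply]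

end slice

section runOp

variable {V W : Type*} [NormedAddCommGroup V] [NormedSpace ℂ V] [NormedAddCommGroup W]
  [NormedSpace ℂ W]

lemma map_runOp (T : V →ₗ[ℂ] W) {Us : ℕ → V →L[ℂ] V} {O : V →L[ℂ] V} {Us' : ℕ → W →L[ℂ] W}
    {O' : W →L[ℂ] W} (hU : ∀ n v, T (Us n v) = Us' n (T v)) (hO : ∀ v, T (O v) = O' (T v))
    (n : ℕ) (v : V) : T (runOp Us O n v) = runOp Us' O' n (T v) := by
  induction n with
  | zero => exact hU 0 v
  | succ n ih => simp only [runOp, ContinuousLinearMap.comp_apply, hU, hO, ih]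

lemma norm_runOp {Us : ℕ → V →L[ℂ] V} {O : V →L[ℂ] V} {n : ℕ}
    (hU : ∀ i ≤ n, ∀ v, ‖Us i v‖ = ‖v‖) (hO : ∀ v, ‖O v‖ = ‖v‖) (v : V) :
    ‖runOp Us O n v‖ = ‖v‖ := by
  induction n with
  | zero => exact hU 0 le_rfl v
  | succ n ih =>
    simp only [runOp, ContinuousLinearMap.comp_apply]
    rw [hU _ le_rfl, hO, ih fun i hi => hU i (hi.trans n.le_succ)]

end runOp

section compressOp

variable {B X Y : Type*} [Fintype B] [DecidableEq B] [Fintype X] [DecidableEq X] [Fintype Y]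
  [DecidableEq Y]

open scoped Kronecker in
/-- The operator `1 ⊗ Comp_DB`. -/
def compressOp (B X Y : Type*) [Fintype B] [DecidableEq B] [Fintype X] [DecidableEq X] [Fintype Y]
    [DecidableEq Y] :
    EuclideanSpace ℂ (B × (X → Option Y)) →L[ℂ] EuclideanSpace ℂ (B × (X → Option Y)) :=
  toOp ((1 : Matrix B B ℂ) ⊗ₖ compDBMat X Y)

lemma compressOp_mul_self [Nonempty Y] : compressOp B X Y * compressOp B X Y = 1 := by
  rw [compressOp, ← toOp_mul, ← Matrix.mul_kronecker_mul, compDBMat_mul_self, one_mul,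
    Matrix.one_kronecker_one, toOp_one]

lemma compressOp_compressOp [Nonempty Y] (u : EuclideanSpace ℂ (B × (X → Option Y))) :
    compressOp B X Y (compressOp B X Y u) = u := by
  rw [← mul_apply_eq_comp, compressOp_mul_self, one_apply_eq_self]

lemma slice_compressOp (u : EuclideanSpace ℂ (B × (X → Option Y))) (b : B) :
    slice (compressOp B X Y u) b = toOp (compDBMat X Y) (slice u b) :=
  slice_toOp_one_kronecker _ u b

lemma norm_toOp_eventProj_record_le [Nonempty Y] {κ : Type*} [Fintype κ] {x : κ → X}
    (hx : Function.Injective x) (y : κ → Y) {φ : EuclideanSpace ℂ (X → Option Y)}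
    (hφ : ∀ D a, D a = none → φ D = 0) :
    ‖toOp (eventProj {D | ∀ i, D (x i) = some (y i)}) φ‖ ≤
      ‖toOp (eventProj {D | ∀ i, D (x i) = some (y i)}) (toOp (compDBMat X Y) φ)‖ +
        √(Fintype.card κ / Fintype.card Y) * ‖φ‖ := by
  classical
  obtain ⟨f, rfl⟩ : ∃ f : X → Y, f ∘ x = y :=
    ⟨_, Function.extend_comp hx y fun _ => Classical.arbitrary Y⟩
  have hevent : {D : X → Option Y | ∀ i, D (x i) = some ((f ∘ x) i)} =
      ((Finset.univ.image x : Finset X) : Set X).pi fun a => {some (f a)} := by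
    ext D
    simp [Set.mem_pi]
  have htotal : registerOp (totalProj X Y) φ = φ := by
    rw [registerOp_totalProj]
    ext D
    rw [toOp_eventProj_apply, ite_eq_left_iff, Set.mem_ofPred_eq, not_forall_not]
    exact fun ⟨a, ha⟩ => (hφ D a ha).symm
  have hcard : (Finset.univ.image x).card = Fintype.card κ := Finset.card_image_of_injective _ hx
  rw [hevent, ← registerOp_recordProj, ← hcard]
  exact norm_registerOp_recordProj_le _ f htotal

/-- The pairs `(b, D)` for which `b` is accepted and `D` records the values `y b` at the points
`x b`. -/
def recordEvent {κ : Type*} (G : Set B) (x : B → κ → X) (y : B → κ → Y) :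
    Set (B × (X → Option Y)) :=
  {p | (∀ i, p.2 (x p.1 i) = some (y p.1 i)) ∧ p.1 ∈ G}

theorem norm_recordEvent_le [Nonempty Y] {κ : Type*} [Fintype κ] (G : Set B) {x : B → κ → X}
    (hx : ∀ b, Function.Injective (x b)) (y : B → κ → Y)
    {u : EuclideanSpace ℂ (B × (X → Option Y))} (hu : ∀ b D a, D a = none → u (b, D) = 0) :
    ‖toOp (eventProj (recordEvent G x y)) u‖ ≤
      ‖toOp (eventProj (recordEvent G x y)) (compressOp B X Y u)‖ +
        √(Fintype.card κ / Fintype.card Y) * ‖u‖ := by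
  refine norm_le_of_norm_slice_le (Real.sqrt_nonneg _) fun b => ?_
  rw [slice_toOp_eventProj, slice_toOp_eventProj, slice_compressOp]
  by_cases hb : b ∈ G
  · have hslice : Prod.mk b ⁻¹' recordEvent G x y = {D | ∀ i, D (x b i) = some (y b i)} := by
      simp [recordEvent, hb]
    rw [hslice]
    exact norm_toOp_eventProj_record_le (hx b) (y b) (hu b)
  · have hslice : Prod.mk b ⁻¹' recordEvent G x y = ∅ := by simp [recordEvent, hb]
    rw [hslice, eventProj_empty, toOp_zero]
    simp only [zero_apply, norm_zero]
    positivity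

end compressOp

section compDBMat

variable {X Y : Type*}

lemma exists_eq_none_of_notMem_range {D : X → Option Y}
    (hD : D ∉ Set.range fun (H : X → Y) a => some (H a)) : ∃ a, D a = none := by
  by_contra! h
  choose H hH using fun a => Option.ne_none_iff_exists'.1 (h a)
  exact hD ⟨H, (funext hH).symm⟩

variable [Fintype X] [Fintype Y] [DecidableEq Y]

lemma compDBMat_some_none (H : X → Y) :
    compDBMat X Y (some ∘ H) (fun _ => none) =
      ((√(Fintype.card Y) : ℝ) : ℂ)⁻¹ ^ Fintype.card X := by
  simp [compDBMat, compMat]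

lemma compDBMat_none_of_eq_none {D : X → Option Y} {a : X} (ha : D a = none) :
    compDBMat X Y D (fun _ => none) = 0 :=
  Finset.prod_eq_zero (Finset.mem_univ a) (by simp [compMat, ha])

end compDBMat

section purification

variable {B X Y : Type*} [Fintype X] [DecidableEq X] [Fintype Y] [DecidableEq Y]

/-- The joint state `M^{-|X|/2} ∑ H, ψ H ⊗ e_H` of the algorithm and of a uniformly random
oracle `H`, the latter being held in superposition as a database without `⊥`. -/
def purification (ψ : (X → Y) → EuclideanSpace ℂ B) : EuclideanSpace ℂ (B × (X → Option Y)) :=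
  ((√(Fintype.card Y) : ℝ) : ℂ)⁻¹ ^ Fintype.card X •
    ∑ H, tensorSingle (some ∘ H) (ψ H)

lemma purification_apply_some (ψ : (X → Y) → EuclideanSpace ℂ B) (b : B) (H : X → Y) :
    purification ψ (b, some ∘ H) =
      ((√(Fintype.card Y) : ℝ) : ℂ)⁻¹ ^ Fintype.card X * ψ H b := by
  simp [purification, tensorSingle_apply, (Option.some_injective Y).comp_left.eq_iff]

lemma purification_apply_of_eq_none (ψ : (X → Y) → EuclideanSpace ℂ B) (b : B)
    {D : X → Option Y} {a : X} (ha : D a = none) : purification ψ (b, D) = 0 := by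
  have hD (H : X → Y) : D ≠ some ∘ H := fun h => by simp [h] at ha
  simp [purification, tensorSingle_apply, hD]

lemma compressOp_tensorSingle_none [Fintype B] [DecidableEq B] (v : EuclideanSpace ℂ B) :
    compressOp B X Y (tensorSingle (fun _ => none) v) = purification fun _ => v := by
  rw [compressOp, toOp_kronecker_tensorSingle, toOp_one, one_apply_eq_self, purification,
    Finset.smul_sum]
  refine (Fintype.sum_of_injective _ (Option.some_injective Y).comp_left _ _
    (fun D hD => ?_) fun H => ?_).symm
  · obtain ⟨a, ha⟩ := exists_eq_none_of_notMem_range hD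
    rw [compDBMat_none_of_eq_none ha, zero_smul]
  · rw [compDBMat_some_none]

lemma norm_toOp_eventProj_purification_sq [Fintype B] [DecidableEq B]
    (E : Set (B × (X → Option Y))) [DecidablePred (· ∈ E)] (ψ : (X → Y) → EuclideanSpace ℂ B) :
    ‖toOp (eventProj E) (purification ψ)‖ ^ 2 =
      (∑ H, ∑ b, if (b, some ∘ H) ∈ E then ‖ψ H b‖ ^ 2 else 0) /
        (Fintype.card Y : ℝ) ^ Fintype.card X := by
  rw [norm_toOp_eventProj_sq, Fintype.sum_prod_type_right, Finset.sum_div]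
  refine (Fintype.sum_of_injective _ (Option.some_injective Y).comp_left _ _
    (fun D hD => ?_) fun H => ?_).symm
  · obtain ⟨a, ha⟩ := exists_eq_none_of_notMem_range hD
    simp [purification_apply_of_eq_none ψ _ ha]
  · rw [Finset.sum_div]
    refine Finset.sum_congr rfl fun b _ => ?_
    rw [purification_apply_some]
    split_ifs
    · rw [norm_mul, norm_pow, norm_inv, Complex.norm_real, Real.norm_of_nonneg (Real.sqrt_nonneg _),
        mul_pow, ← pow_mul, mul_comm _ 2, pow_mul, inv_pow, Real.sq_sqrt (Nat.cast_nonneg _),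
        inv_pow, div_eq_inv_mul]
    · rw [zero_div]

lemma norm_purification [Nonempty Y] [Fintype B] {ψ : (X → Y) → EuclideanSpace ℂ B}
    (hψ : ∀ H, ‖ψ H‖ = 1) : ‖purification ψ‖ = 1 := by
  classical
  have h := norm_toOp_eventProj_purification_sq Set.univ ψ
  simp only [eventProj_univ, toOp_one, one_apply_eq_self, Set.mem_univ, if_true,
    ← EuclideanSpace.norm_sq_eq, hψ] at h
  rw [← sq_eq_sq₀ (norm_nonneg _) zero_le_one, h]
  simp

end purification

section evolution

/-- The index set of the computational basis of the algorithm's working space `W`. -/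
abbrev WorkIdx (X Y : Type*) (k d : ℕ) : Type _ :=
  (Fin k → X) × (Fin k → Y) × Fin d

variable {X Y : Type*} {k d : ℕ}

lemma shiftIdx_injective [AddCommGroup Y] (H : X → Y) :
    Function.Injective fun b : WorkIdx X Y k d => (shiftIdx (b, some ∘ H)).1 := by
  rintro ⟨x, y, w⟩ ⟨x', y', w'⟩ h
  obtain ⟨rfl, hy, rfl⟩ :
      x = x' ∧ (fun i => y i + H (x i)) = (fun i => y' i + H (x' i)) ∧ w = w' := by
    simpa [shiftIdx] using h
  simpa [funext_iff] using hy

variable [Fintype X] [DecidableEq X] [Fintype Y] [DecidableEq Y]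

section uExtMat

variable (A : EuclideanSpace ℂ (WorkIdx X Y k d) →L[ℂ] EuclideanSpace ℂ (WorkIdx X Y k d))

open scoped Kronecker in
lemma uExtMat_eq_kronecker : uExtMat X Y k d A = matOf A ⊗ₖ 1 := by
  ext p' p
  simp [uExtMat, Matrix.one_apply]

lemma toOp_uExtMat_tensorSingle (D : X → Option Y) (v : EuclideanSpace ℂ (WorkIdx X Y k d)) :
    toOp (uExtMat X Y k d A) (tensorSingle D v) = tensorSingle D (A v) := by
  rw [uExtMat_eq_kronecker, toOp_kronecker_one_tensorSingle, toOp_matOf]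

lemma commute_compressOp_toOp_uExtMat :
    Commute (compressOp (WorkIdx X Y k d) X Y) (toOp (uExtMat X Y k d A)) := by
  rw [Commute, SemiconjBy, compressOp, uExtMat_eq_kronecker, ← toOp_mul, ← toOp_mul,
    ← Matrix.mul_kronecker_mul, ← Matrix.mul_kronecker_mul, one_mul, mul_one, mul_one, one_mul]

end uExtMat

variable [AddCommGroup Y]

lemma toOp_cOMat : toOp (cOMat X Y k d) =
    compressOp (WorkIdx X Y k d) X Y * toOp (basisMapMat shiftIdx) *
      compressOp (WorkIdx X Y k d) X Y := by
  have h : (Matrix.of fun p' p : WorkIdx X Y k d × (X → Option Y) =>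
      if p'.1 = p.1 then compDBMat X Y p'.2 p.2 else 0) =
      Matrix.kroneckerMap (· * ·) 1 (compDBMat X Y) := by
    ext p' p
    simp [Matrix.one_apply]
  rw [compressOp, ← toOp_mul, ← toOp_mul, ← h]
  rfl

lemma toOp_basisMapMat_shiftIdx_tensorSingle {H : X → Y}
    {A : EuclideanSpace ℂ (WorkIdx X Y k d) →L[ℂ] EuclideanSpace ℂ (WorkIdx X Y k d)}
    (hA : ∀ b, A (EuclideanSpace.single b 1) = EuclideanSpace.single (shiftIdx (b, some ∘ H)).1 1)
    (v : EuclideanSpace ℂ (WorkIdx X Y k d)) :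
    toOp (basisMapMat shiftIdx) (tensorSingle (some ∘ H) v) = tensorSingle (some ∘ H) (A v) := by
  let T : EuclideanSpace ℂ (WorkIdx X Y k d) →ₗ[ℂ] _ := tensorSingle (some ∘ H : X → Option Y)
  suffices h : (toOp (basisMapMat shiftIdx)).toLinearMap ∘ₗ T = T ∘ₗ A.toLinearMap from
    DFunLike.congr_fun h v
  refine (EuclideanSpace.basisFun _ ℂ).toBasis.ext fun b => ?_
  simp only [T, OrthonormalBasis.coe_toBasis, EuclideanSpace.basisFun_apply, LinearMap.comp_apply,
    ContinuousLinearMap.coe_coe, tensorSingle_single, toOp_basisMapMat_single, hA]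
  rfl

theorem runOp_cOMat_tensorBot
    (U : ℕ → EuclideanSpace ℂ (WorkIdx X Y k d) →L[ℂ] EuclideanSpace ℂ (WorkIdx X Y k d))
    {O : (X → Y) → EuclideanSpace ℂ (WorkIdx X Y k d) →L[ℂ] EuclideanSpace ℂ (WorkIdx X Y k d)}
    (hO : ∀ H b, O H (EuclideanSpace.single b 1) =
      EuclideanSpace.single (shiftIdx (b, some ∘ H)).1 1)
    (q : ℕ) (ψ0 : EuclideanSpace ℂ (WorkIdx X Y k d)) :
    runOp (fun n => toOp (uExtMat X Y k d (U n))) (toOp (cOMat X Y k d)) q (tensorBot ψ0) =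
      compressOp (WorkIdx X Y k d) X Y (purification fun H => runOp U (O H) q ψ0) := by
  let C := compressOp (WorkIdx X Y k d) X Y
  let Us n := toOp (uExtMat X Y k d (U n))
  let S : EuclideanSpace ℂ (WorkIdx X Y k d × (X → Option Y)) →L[ℂ] _ :=
    toOp (basisMapMat shiftIdx)
  have hbot : C (purification fun _ => ψ0) = tensorBot ψ0 := by
    rw [← compressOp_tensorSingle_none, compressOp_compressOp]
    rfl
  have hcompressed : C (runOp Us S q (purification fun _ => ψ0)) =
      runOp Us (toOp (cOMat X Y k d)) q (C (purification fun _ => ψ0)) := by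
    refine map_runOp C.toLinearMap (fun n v => ?_) (fun v => ?_) q _
    · exact DFunLike.congr_fun (commute_compressOp_toOp_uExtMat (U n)).eq v
    · rw [toOp_cOMat, mul_apply_eq_comp]
      exact congrArg (fun v => C (S v)) (compressOp_compressOp v).symm
  have hpure : runOp Us S q (purification fun _ => ψ0) =
      purification fun H => runOp U (O H) q ψ0 := by
    simp only [purification, map_smul, map_sum]
    congr! 2 with H
    exact (map_runOp (tensorSingle (some ∘ H))
      (fun n v => (toOp_uExtMat_tensorSingle (U n) _ v).symm)
      (fun v => (toOp_basisMapMat_shiftIdx_tensorSingle (hO H) v).symm) q ψ0).symm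
  rw [← hbot, ← hcompressed, hpure]

end evolution

open Classical in
theorem stmt_4 {X Y : Type*} [Fintype X] [DecidableEq X] [Nonempty X]
    [Fintype Y] [DecidableEq Y] [AddCommGroup Y]
    (ℓ : ℕ) (hℓ : 1 ≤ ℓ)
    -- a relation `R ⊆ X^ℓ × Y^ℓ`
    (R : (Fin ℓ → X) → (Fin ℓ → Y) → Prop)
    (k q : ℕ) (hk : 1 ≤ k) (hq : 1 ≤ q)
    -- a `k`-parallel `q`-query quantum oracle algorithm `(d, ψ₀, U_0, …, U_q)`
    (d : ℕ) (hd : 1 ≤ d)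
    (ψ0 : EuclideanSpace ℂ ((Fin k → X) × (Fin k → Y) × Fin d)) (hψ0 : ‖ψ0‖ = 1)
    (U : ℕ → (EuclideanSpace ℂ ((Fin k → X) × (Fin k → Y) × Fin d) →L[ℂ]
              EuclideanSpace ℂ ((Fin k → X) × (Fin k → Y) × Fin d)))
    (hU : ∀ i ≤ q,
      U i ∈ unitary (EuclideanSpace ℂ ((Fin k → X) × (Fin k → Y) × Fin d) →L[ℂ]
        EuclideanSpace ℂ ((Fin k → X) × (Fin k → Y) × Fin d)))
    -- the oracle unitary `O_H`, permuting the basis by `(x, y, w) ↦ (x, y + H(x), w)`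
    (O : (X → Y) → (EuclideanSpace ℂ ((Fin k → X) × (Fin k → Y) × Fin d) →L[ℂ]
        EuclideanSpace ℂ ((Fin k → X) × (Fin k → Y) × Fin d)))
    (hO : ∀ (H : X → Y) (x : Fin k → X) (y : Fin k → Y) (wr : Fin d),
      O H (EuclideanSpace.single (x, y, wr) 1) =
        EuclideanSpace.single (x, fun i => y i + H (x i), wr) 1)
    -- readout functions, with pairwise distinct components of `outX b`
    (outX : ((Fin k → X) × (Fin k → Y) × Fin d) → Fin ℓ → X)
    (outY : ((Fin k → X) × (Fin k → Y) × Fin d) → Fin ℓ → Y)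
    (houtX : ∀ b, Function.Injective (outX b)) :
    -- `√p ≤ √p' + √(ℓ/M)`
    Real.sqrt
      ((∑ H : X → Y, ∑ b : (Fin k → X) × (Fin k → Y) × Fin d,
          if (outY b = fun i => H (outX b i)) ∧ R (outX b) (outY b)
          then ‖inner (𝕜 := ℂ) (EuclideanSpace.single b 1) (runOp U (O H) q ψ0)‖ ^ 2
          else 0) / (Fintype.card Y : ℝ) ^ (Fintype.card X))
      ≤ Real.sqrt
          (∑ b : (Fin k → X) × (Fin k → Y) × Fin d, ∑ D : X → Option Y,
            if (∀ i, D (outX b i) = some (outY b i)) ∧ R (outX b) (outY b)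
            then ‖inner (𝕜 := ℂ) (EuclideanSpace.single (b, D) 1)
              (runOp (fun n => toOp (uExtMat X Y k d (U n))) (toOp (cOMat X Y k d)) q
                (tensorBot ψ0))‖ ^ 2
            else 0) +
        Real.sqrt (ℓ / Fintype.card Y) := by
  have : Nonempty Y := ⟨0⟩
  have hshift (H : X → Y) (b : WorkIdx X Y k d) := hO H b.1 b.2.1 b.2.2
  let E := recordEvent {b | R (outX b) (outY b)} outX outY
  let Φ := purification fun H => runOp U (O H) q ψ0
  have hΦ : ‖Φ‖ = 1 := norm_purification fun H =>
    (norm_runOp (fun i hi => ContinuousLinearMap.norm_map_of_mem_unitary (hU i hi))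
      (norm_map_of_map_single (shiftIdx_injective H) (hshift H)) ψ0).trans hψ0
  rw [runOp_cOMat_tensorBot U hshift]
  calc
    _ = ‖toOp (eventProj E) Φ‖ := by
      rw [← Real.sqrt_sq (norm_nonneg (toOp _ _)), norm_toOp_eventProj_purification_sq]
      simp [E, recordEvent, funext_iff, eq_comm, EuclideanSpace.inner_single_left]
    _ ≤ ‖toOp (eventProj E) (compressOp _ X Y Φ)‖ +
          √(Fintype.card (Fin ℓ) / Fintype.card Y) * ‖Φ‖ :=
      norm_recordEvent_le _ houtX outY fun b D a => purification_apply_of_eq_none _ b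
    _ = _ := by
      rw [hΦ, mul_one, Fintype.card_fin, ← Real.sqrt_sq (norm_nonneg (toOp _ _)),
        norm_toOp_eventProj_sq]
      simp [E, Φ, recordEvent, EuclideanSpace.inner_single_left, Fintype.sum_prod_type]

end
end

section
/- Let ◁ ⊆ Y × X be a relation and T an integer with |{y ∈ Y : y ◁ x}| ≤ T for every x ∈ X, and let k, q ≥ 1. Consider any k-parallel q-query quantum oracle algorithm (d, ψ₀, U_0, …, U_q) together with an arbitrary readout function out : B → X^{q+2}. Let p := M^{−|X|} · Σ_{H : X→Y} Σ_{b ∈ B such that H(out(b)_i) ◁ out(b)_{i+1} for all 0 ≤ i ≤ q} |⟨e_b, ψ_H⟩|². Then p ≤ ( q·k·e·√(10·q·k·T/M) + e·(q+2)·√(10·T·(q+2)/M) + √((q+2)/M) )², where e is Euler's number. (In particular, the success probability of finding a (q+1)-chain x_0, x_1, …, x_{q+1} with H(x_i) ◁ x_{i+1} for all i using q k-parallel quantum queries is O(q³·k³·T/M).) -/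
noncomputable section

/-!
Zhandry's compressed oracle: in superposition over all `H` the oracle becomes a register holding a
database `D : X → Option Y` of the values queried so far, and the reflection of `ℂ^(Option Y)` that
exchanges the empty value with the uniform superposition of `Y`, applied at every place, translates
between databases and functions. In each Fourier mode of the algorithm's register, a `k`-parallel
query acts on the database as a tensor product of unitaries of `ℂ^(Option Y)`, at most `k` of them
nontrivial, and in each of these the off-diagonal part of the rows of any `N` given values has norm
`O(√(N / M))`. After `n` queries the database has at most `n k` entries, so at most `n k T` values
can lengthen a chain; the next query therefore raises the amplitude of the databases with a chain of
length `n + 1` over the previous one for length `n` by only `O(k √(n k T / M))`. Finally,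
decompression turns a database without a chain of length `q + 1` into a function with the chain that
is output only with amplitude `O(q √(T / M))`.
-/

section L2OpNorm

open Matrix
open scoped Matrix.Norms.L2Operator

theorem norm_le_one_of_mem_unitary {A : Type*} [NormedRing A] [StarRing A] [CStarRing A] {u : A}
    (hu : u ∈ unitary A) : ‖u‖ ≤ 1 := by
  rcases subsingleton_or_nontrivial A with _ | _
  · simp [Subsingleton.elim u 0]
  · exact (CStarRing.norm_of_mem_unitary hu).le

variable {m : Type*} [Fintype m] [DecidableEq m]

theorem l2_opNorm_le_iff_sum_norm_sq_mulVec_le {A : Matrix m m ℂ} {r : ℝ} (hr : 0 ≤ r) :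
    ‖A‖ ≤ r ↔ ∀ v : m → ℂ, ∑ a, ‖(A *ᵥ v) a‖ ^ 2 ≤ r ^ 2 * ∑ a, ‖v a‖ ^ 2 := by
  have hsq (v : m → ℂ) : ‖WithLp.toLp 2 (A *ᵥ v)‖ ≤ r * ‖WithLp.toLp 2 v‖ ↔
      ∑ a, ‖(A *ᵥ v) a‖ ^ 2 ≤ r ^ 2 * ∑ a, ‖v a‖ ^ 2 := by
    rw [← sq_le_sq₀ (norm_nonneg _) (by positivity), mul_pow, EuclideanSpace.norm_sq_eq,
      EuclideanSpace.norm_sq_eq]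
  simp only [← hsq]
  refine ⟨fun h v => (l2_opNorm_mulVec A (WithLp.toLp 2 v)).trans (by gcongr), fun h => ?_⟩
  rw [l2_opNorm_def]
  exact ContinuousLinearMap.opNorm_le_bound _ hr fun v => h v

theorem l2_opNorm_sq_le_sum_norm_sq (A : Matrix m m ℂ) : ‖A‖ ^ 2 ≤ ∑ i, ∑ j, ‖A i j‖ ^ 2 := by
  have hnonneg : 0 ≤ ∑ i, ∑ j, ‖A i j‖ ^ 2 := by positivity
  refine (Real.le_sqrt (norm_nonneg _) hnonneg).mp <|
    (l2_opNorm_le_iff_sum_norm_sq_mulVec_le (Real.sqrt_nonneg _)).mpr fun v => ?_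
  rw [Real.sq_sqrt hnonneg, Finset.sum_mul]
  refine Finset.sum_le_sum fun i _ => ?_
  calc ‖∑ j, A i j * v j‖ ^ 2
      ≤ (∑ j, ‖A i j‖ * ‖v j‖) ^ 2 := by
        gcongr
        exact (norm_sum_le _ _).trans_eq (Finset.sum_congr rfl fun j _ => norm_mul _ _)
    _ ≤ _ := Finset.sum_mul_sq_le_sq_mul_sq _ _ _

theorem sum_norm_sq_row_of_mem_unitary {L : Matrix m m ℂ} (hL : L ∈ unitary (Matrix m m ℂ))
    (i : m) : ∑ j, ‖L i j‖ ^ 2 = 1 := by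
  have h : (L * star L) i i = 1 := by rw [Unitary.mul_star_self_of_mem hL, one_apply_eq]
  simp only [Matrix.mul_apply, star_apply, RCLike.star_def, Complex.mul_conj'] at h
  exact_mod_cast h

theorem diagonal_mem_unitary {w : m → ℂ} (hw : ∀ a, ‖w a‖ = 1) :
    diagonal w ∈ unitary (Matrix m m ℂ) := by
  rw [Unitary.mem_iff, star_eq_conjTranspose, diagonal_conjTranspose, diagonal_mul_diagonal,
    diagonal_mul_diagonal, ← diagonal_one]
  simp [Complex.conj_mul', Complex.mul_conj', hw]

theorem one_sub_norm_sq_conj_diagonal_apply_le {C : Matrix m m ℂ}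
    (hC : C ∈ unitary (Matrix m m ℂ)) {w : m → ℂ} (hw : ∀ a, ‖w a‖ = 1) (i : m) :
    1 - ‖(C * diagonal w * star C) i i‖ ^ 2 ≤ 4 * (1 - ‖C i i‖ ^ 2) := by
  have hrow := sum_norm_sq_row_of_mem_unitary hC i
  have hentry : (C * diagonal w * star C) i i = ∑ j, C i j * w j * star (C i j) := by
    simp only [Matrix.mul_apply (M := C * diagonal w), mul_diagonal, star_apply]
  have hterm j : ‖C i j * w j * star (C i j)‖ = ‖C i j‖ ^ 2 := by
    rw [norm_mul, norm_mul, hw, mul_one, norm_star, sq]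
  rw [← Finset.add_sum_erase _ _ (Finset.mem_univ i)] at hrow hentry
  have hrest : ‖∑ j ∈ Finset.univ.erase i, C i j * w j * star (C i j)‖ ≤ 1 - ‖C i i‖ ^ 2 := by
    refine (norm_sum_le _ _).trans_eq ?_
    simp only [hterm, ← hrow, add_sub_cancel_left]
  have hlower := norm_sub_le_norm_add (C i i * w i * star (C i i))
    (∑ j ∈ Finset.univ.erase i, C i j * w j * star (C i j))
  rw [← hentry, hterm] at hlower
  nlinarith [sq_nonneg (1 - ‖(C * diagonal w * star C) i i‖)]

/-- The orthogonal projection onto the span of the basis vectors indexed by `P`, as a matrix. -/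
def coordProj (P : Set m) : Matrix m m ℂ := diagonal (P.indicator 1)

theorem coordProj_mulVec (P : Set m) (v : m → ℂ) : coordProj P *ᵥ v = P.indicator v := by
  ext a
  by_cases ha : a ∈ P <;> simp [coordProj, mulVec_diagonal, ha]

theorem norm_coordProj_le_one (P : Set m) : ‖coordProj P‖ ≤ 1 := by
  rw [coordProj, l2_opNorm_diagonal, pi_norm_le_iff_of_nonneg zero_le_one]
  intro a
  by_cases ha : a ∈ P <;> simp [ha]

theorem coordProj_mul_apply (P : Set m) (A : Matrix m m ℂ) (a b : m) :
    (coordProj P * A) a b = P.indicator (fun a => A a b) a := by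
  by_cases ha : a ∈ P <;> simp [coordProj, diagonal_mul, ha]

theorem mul_coordProj_apply (A : Matrix m m ℂ) (Q : Set m) (a b : m) :
    (A * coordProj Q) a b = Q.indicator (A a) b := by
  by_cases hb : b ∈ Q <;> simp [coordProj, mul_diagonal, hb]

theorem coordProj_mul_coordProj (P Q : Set m) :
    coordProj P * coordProj Q = coordProj (P ∩ Q) := by
  rw [coordProj, coordProj, diagonal_mul_diagonal, coordProj, Set.inter_indicator_one]
  rfl

theorem coordProj_mul_mul_coordProj_eq_zero {P Q : Set m} {A : Matrix m m ℂ}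
    (h : ∀ a ∈ P, ∀ b ∈ Q, A a b = 0) : coordProj P * A * coordProj Q = 0 := by
  classical
  ext a b
  rw [mul_coordProj_apply, Set.indicator_apply, coordProj_mul_apply, Set.indicator_apply]
  split_ifs with hb ha
  exacts [h a ha b hb, rfl, rfl]

theorem norm_coordProj_mul_mul_coordProj_le (P Q : Set m) (A : Matrix m m ℂ) :
    ‖coordProj P * A * coordProj Q‖ ≤ ‖A‖ :=
  calc ‖coordProj P * A * coordProj Q‖
      ≤ ‖coordProj P * A‖ * ‖coordProj Q‖ := norm_mul_le _ _
    _ ≤ ‖coordProj P * A‖ := mul_le_of_le_one_right (norm_nonneg _) (norm_coordProj_le_one Q)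
    _ ≤ ‖coordProj P‖ * ‖A‖ := norm_mul_le _ _
    _ ≤ ‖A‖ := mul_le_of_le_one_left (norm_nonneg _) (norm_coordProj_le_one P)

theorem l2_opNorm_le_of_forall_fiber {Γ : Type*} {c : m → Γ} {A : Matrix m m ℂ}
    (hc : ∀ a b, A a b ≠ 0 → c a = c b) {r : ℝ} (hr : 0 ≤ r)
    (h : ∀ γ, ‖coordProj (c ⁻¹' {γ}) * A * coordProj (c ⁻¹' {γ})‖ ≤ r) : ‖A‖ ≤ r := by
  classical
  rw [l2_opNorm_le_iff_sum_norm_sq_mulVec_le hr]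
  intro v
  have hmaps : ∀ a ∈ Finset.univ, c a ∈ Finset.univ.image c := by simp
  rw [← Finset.sum_fiberwise_of_maps_to hmaps, ← Finset.sum_fiberwise_of_maps_to hmaps,
    Finset.mul_sum]
  refine Finset.sum_le_sum fun γ _ => ?_
  set P : Set m := c ⁻¹' {γ} with hP
  have hfiber (F : m → ℂ) : ∑ a with c a = γ, ‖F a‖ ^ 2 = ∑ a, ‖P.indicator F a‖ ^ 2 := by
    rw [Finset.sum_filter]
    exact Finset.sum_congr rfl fun a _ => by by_cases ha : c a = γ <;> simp [hP, ha]
  have hmulVec : P.indicator (A *ᵥ v) = (coordProj P * A * coordProj P) *ᵥ P.indicator v := by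
    rw [← mulVec_mulVec, ← mulVec_mulVec, coordProj_mulVec, coordProj_mulVec,
      Set.indicator_indicator, Set.inter_self]
    refine Set.indicator_congr fun a ha => Finset.sum_congr rfl fun b _ => ?_
    change A a b * v b = A a b * P.indicator v b
    by_cases hb : b ∈ P
    · rw [Set.indicator_of_mem hb]
    · have hAab : A a b = 0 := by
        by_contra hne
        exact hb ((hc a b hne).symm.trans ha)
      rw [hAab, zero_mul, zero_mul]
  rw [hfiber, hfiber, hmulVec]
  exact (l2_opNorm_le_iff_sum_norm_sq_mulVec_le hr).mp (h γ) _

/-- The matrix obtained from `L` by replacing by zero all off-diagonal entries in the rows `A`. -/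
def eraseOffDiagRows (A : Set m) (L : Matrix m m ℂ) : Matrix m m ℂ :=
  L - coordProj A * (L - diagonal L.diag)

theorem eraseOffDiagRows_apply_of_mem {A : Set m} {i j : m} (hi : i ∈ A) (hij : i ≠ j)
    (L : Matrix m m ℂ) : eraseOffDiagRows A L i j = 0 := by
  simp [eraseOffDiagRows, coordProj_mul_apply, hi, hij]

theorem eraseOffDiagRows_apply_eq_zero {L : Matrix m m ℂ} {i j : m} (h : L i j = 0) (A : Set m) :
    eraseOffDiagRows A L i j = 0 := by
  have hdiag : diagonal L.diag i j = 0 := by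
    by_cases hij : i = j
    · subst hij
      simp [h]
    · exact diagonal_apply_ne _ hij
  by_cases hi : i ∈ A <;> simp [eraseOffDiagRows, coordProj_mul_apply, hi, h, hdiag]

theorem norm_sub_eraseOffDiagRows_sq_le {L : Matrix m m ℂ}
    (hL : L ∈ unitary (Matrix m m ℂ)) {A : Set m} {ε : ℝ} (hA : ∀ i ∈ A, 1 - ‖L i i‖ ^ 2 ≤ ε) :
    ‖L - eraseOffDiagRows A L‖ ^ 2 ≤ A.ncard * ε := by
  classical
  rw [eraseOffDiagRows, sub_sub_cancel]
  have hrow i : ∑ j, ‖(L - diagonal L.diag) i j‖ ^ 2 = 1 - ‖L i i‖ ^ 2 := by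
    rw [← sum_norm_sq_row_of_mem_unitary hL i, ← Finset.add_sum_erase _ _ (Finset.mem_univ i),
      ← Finset.add_sum_erase _ (fun j => ‖L i j‖ ^ 2) (Finset.mem_univ i), add_sub_cancel_left]
    have hoff : ∀ j ∈ Finset.univ.erase i, ‖(L - diagonal L.diag) i j‖ ^ 2 = ‖L i j‖ ^ 2 :=
      fun j hj => by simp [diagonal_apply_ne _ (Finset.ne_of_mem_erase hj).symm]
    rw [Finset.sum_congr rfl hoff, Matrix.sub_apply, diagonal_apply_eq, diag_apply, sub_self,
      norm_zero, zero_pow two_ne_zero, zero_add]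
  calc ‖coordProj A * (L - diagonal L.diag)‖ ^ 2
      ≤ ∑ i, ∑ j, ‖(coordProj A * (L - diagonal L.diag)) i j‖ ^ 2 :=
        l2_opNorm_sq_le_sum_norm_sq _
    _ = ∑ i ∈ A.toFinset, (1 - ‖L i i‖ ^ 2) := by
        rw [← Finset.sum_subset (Finset.subset_univ A.toFinset) fun i _ hi => ?_]
        · refine Finset.sum_congr rfl fun i hi => ?_
          simp only [coordProj_mul_apply, Set.indicator_of_mem (Set.mem_toFinset.mp hi), hrow]
        · simp [coordProj_mul_apply, Set.indicator_of_notMem (Set.mem_toFinset.not.mp hi)]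
    _ ≤ A.toFinset.card • ε :=
        Finset.sum_le_card_nsmul _ _ _ fun i hi => hA i (Set.mem_toFinset.mp hi)
    _ = A.ncard * ε := by rw [nsmul_eq_mul, Set.ncard_eq_toFinset_card']

end L2OpNorm

section PiKronecker

open Matrix
open scoped Matrix.Norms.L2Operator

variable {ι o : Type*} [Fintype ι]

/-- The tensor product `⨂ z, L z` of a family of square matrices, as a matrix indexed by the
functions `ι → o`. -/
def piKronecker : MultilinearMap ℂ (fun _ : ι => Matrix o o ℂ) (Matrix (ι → o) (ι → o) ℂ) :=
  (ofLinearEquiv ℂ).toLinearMap.compMultilinearMap <| .pi fun a => .pi fun b =>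
    (MultilinearMap.mkPiAlgebra ℂ ι ℂ).compLinearMap fun z => entryLinearMap ℂ ℂ (a z) (b z)

theorem piKronecker_apply (L : ι → Matrix o o ℂ) (a b : ι → o) :
    piKronecker L a b = ∏ z, L z (a z) (b z) := rfl

theorem piKronecker_apply_ne_zero {L : ι → Matrix o o ℂ} {a b : ι → o} :
    piKronecker L a b ≠ 0 ↔ ∀ z, L z (a z) (b z) ≠ 0 := by
  simp [piKronecker_apply, Finset.prod_ne_zero_iff]

theorem star_piKronecker (L : ι → Matrix o o ℂ) : star (piKronecker L) = piKronecker (star L) := by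
  ext a b
  simp [piKronecker_apply]

theorem piKronecker_mul [DecidableEq ι] [Fintype o] (L K : ι → Matrix o o ℂ) :
    piKronecker L * piKronecker K = piKronecker (L * K) := by
  ext a b
  simp only [Matrix.mul_apply, piKronecker_apply, Pi.mul_apply, Fintype.prod_sum,
    Finset.prod_mul_distrib]

variable [DecidableEq o]

theorem piKronecker_diagonal (w : ι → o → ℂ) :
    piKronecker (fun z => diagonal (w z)) = diagonal fun a => ∏ z, w z (a z) := by
  ext a b
  rw [piKronecker_apply]
  by_cases h : a = b
  · simp [h]
  · obtain ⟨z, hz⟩ := Function.ne_iff.mp h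
    rw [diagonal_apply_ne _ h]
    exact Finset.prod_eq_zero (Finset.mem_univ z) (diagonal_apply_ne _ hz)

theorem piKronecker_one : piKronecker (1 : ι → Matrix o o ℂ) = 1 := by
  simpa [← Pi.one_def] using piKronecker_diagonal fun (_ : ι) (_ : o) => (1 : ℂ)

variable [DecidableEq ι] [Fintype o]

/-- The matrix `1 ⊗ ⋯ ⊗ A ⊗ ⋯ ⊗ 1` acting as `A` on the tensor factor `z` and trivially on all
the others. -/
def singleKronecker (z : ι) : Matrix o o ℂ →⋆ₐ[ℂ] Matrix (ι → o) (ι → o) ℂ where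
  toFun A := piKronecker (Function.update 1 z A)
  map_one' := by rw [← Pi.one_apply (M := fun _ => Matrix o o ℂ) z, Function.update_eq_self,
    piKronecker_one]
  map_mul' A B := by rw [piKronecker_mul, ← Function.update_mul, one_mul]
  map_zero' := piKronecker.map_update_zero 1 z
  map_add' := piKronecker.map_update_add 1 z
  commutes' c := by
    rw [Algebra.algebraMap_eq_smul_one, piKronecker.map_update_smul,
      ← Pi.one_apply (M := fun _ => Matrix o o ℂ) z, Function.update_eq_self, piKronecker_one,
      Algebra.algebraMap_eq_smul_one]
  map_star' A := by rw [star_piKronecker, ← Function.update_star, star_one]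

theorem norm_singleKronecker_le (z : ι) (A : Matrix o o ℂ) : ‖singleKronecker z A‖ ≤ ‖A‖ :=
  NonUnitalStarAlgHom.norm_apply_le (singleKronecker z) A

theorem piKronecker_piecewise_insert_one (L : ι → Matrix o o ℂ) {s : Finset ι} {z : ι}
    (hz : z ∉ s) : piKronecker ((insert z s).piecewise L 1) =
      singleKronecker z (L z) * piKronecker (s.piecewise L 1) := by
  change _ = piKronecker _ * _
  rw [piKronecker_mul, Finset.piecewise_insert]
  congr 1
  ext1 x
  by_cases hx : x = z
  · subst hx
    simp [hz]
  · simp [hx]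

theorem norm_piKronecker_le (L : ι → Matrix o o ℂ) : ‖piKronecker L‖ ≤ ∏ z, ‖L z‖ := by
  suffices h : ∀ s : Finset ι, ‖piKronecker (s.piecewise L 1)‖ ≤ ∏ z ∈ s, ‖L z‖ by
    simpa using h Finset.univ
  intro s
  induction s using Finset.induction_on with
  | empty =>
    rw [Finset.piecewise_empty, piKronecker_one, Finset.prod_empty]
    exact norm_le_one_of_mem_unitary (one_mem _)
  | insert z s hz ih =>
    rw [piKronecker_piecewise_insert_one L hz, Finset.prod_insert hz]
    exact (norm_mul_le _ _).trans (by gcongr; exact norm_singleKronecker_le z (L z))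

theorem norm_piKronecker_le_one {L : ι → Matrix o o ℂ} (hL : ∀ z, ‖L z‖ ≤ 1) :
    ‖piKronecker L‖ ≤ 1 :=
  (norm_piKronecker_le L).trans (Finset.prod_le_one (fun _ _ => norm_nonneg _) fun z _ => hL z)

theorem norm_piKronecker_sub_le {L K : ι → Matrix o o ℂ} {s : Finset ι} {δ : ℝ}
    (hL : ∀ z, ‖L z‖ ≤ 1) (hoff : ∀ z ∉ s, K z = L z) (hδ : ∀ z ∈ s, ‖L z - K z‖ ≤ δ) :
    ‖piKronecker L - piKronecker K‖ ≤ s.card * δ * Real.exp (s.card * δ) := by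
  rcases s.eq_empty_or_nonempty with rfl | ⟨z₀, hz₀⟩
  · simp [funext fun z => hoff z (Finset.notMem_empty z)]
  have hδ₀ : 0 ≤ δ := (norm_nonneg _).trans (hδ z₀ hz₀)
  have hmax : ∀ z ∈ s, max ‖L z‖ ‖K z‖ ≤ 1 + δ := fun z hz => by
    have hK := norm_sub_le (L z) (L z - K z)
    rw [sub_sub_cancel] at hK
    exact max_le (by linarith [hL z]) (by linarith [hL z, hδ z hz])
  have hterm : ∀ z, (∏ x, if x = z then ‖L z - K z‖ else max ‖L x‖ ‖K x‖) ≤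
      if z ∈ s then δ * Real.exp (s.card * δ) else 0 := by
    intro z
    split_ifs with hz
    · calc (∏ x, if x = z then ‖L z - K z‖ else max ‖L x‖ ‖K x‖)
          ≤ ∏ x, (if x = z then δ else 1) * if x ∈ s then 1 + δ else 1 := by
            refine Finset.prod_le_prod (fun x _ => by positivity) fun x _ => ?_
            split_ifs with hxz hxs hxs
            · nlinarith [hδ z hz]
            · exact absurd (hxz ▸ hz) hxs
            · simpa using hmax x hxs
            · simpa [hoff x hxs] using hL x
        _ = δ * (1 + δ) ^ s.card := by rw [Finset.prod_mul_distrib]; simp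
        _ ≤ δ * Real.exp (s.card * δ) := by
            rw [Real.exp_nat_mul, add_comm]
            gcongr
            exact Real.add_one_le_exp δ
    · exact (Finset.prod_eq_zero (Finset.mem_univ z) (by simp [hoff z hz])).le
  calc ‖piKronecker L - piKronecker K‖
      ≤ 1 * ∑ z, ∏ x, if x = z then ‖L z - K z‖ else max ‖L x‖ ‖K x‖ :=
        piKronecker.norm_image_sub_le_of_bound' zero_le_one
          (fun L => (norm_piKronecker_le L).trans_eq (one_mul _).symm) L K
    _ ≤ 1 * ∑ z, if z ∈ s then δ * Real.exp (s.card * δ) else 0 := by gcongr with z; exact hterm z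
    _ = s.card * δ * Real.exp (s.card * δ) := by
        rw [one_mul, Finset.sum_ite_mem, Finset.univ_inter, Finset.sum_const, nsmul_eq_mul,
          mul_assoc]

end PiKronecker

section TransitionBound

open Matrix
open scoped Matrix.Norms.L2Operator

variable {ι o : Type*} [Fintype ι] [DecidableEq ι] [Fintype o] [DecidableEq o]
  {L : ι → Matrix o o ℂ} {P P' : Set (ι → o)} {s : Finset ι} {N : ℕ} {ε : ℝ}

/-- Erasing the off-diagonal entries of the rows `A z` of `L z` kills every transition, and it
moves each of the `s.card` factors by at most `√(N ε)`. -/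
theorem norm_coordProj_mul_piKronecker_mul_coordProj_le
    (hL : ∀ z, L z ∈ unitary (Matrix o o ℂ)) {A : ι → Set o} (hA : ∀ z ∈ s, (A z).ncard ≤ N)
    (hε₀ : 0 ≤ ε) (hε : ∀ z ∈ s, ∀ i ∈ A z, 1 - ‖L z i i‖ ^ 2 ≤ ε)
    (h : ∀ a ∈ P', ∀ b ∈ P, piKronecker L a b ≠ 0 → ∃ z ∈ s, a z ∈ A z ∧ a z ≠ b z) :
    ‖coordProj P' * piKronecker L * coordProj P‖ ≤ s.card * √(N * ε) * Real.exp 1 := by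
  have hL₁ z : ‖L z‖ ≤ 1 := norm_le_one_of_mem_unitary (hL z)
  rcases le_or_gt 1 (s.card * √(N * ε) * Real.exp 1) with hlarge | hsmall
  · exact (norm_coordProj_mul_mul_coordProj_le _ _ _).trans
      ((norm_piKronecker_le_one hL₁).trans hlarge)
  set K : ι → Matrix o o ℂ := s.piecewise (fun z => eraseOffDiagRows (A z) (L z)) L with hK
  have hKzero : coordProj P' * piKronecker K * coordProj P = 0 := by
    refine coordProj_mul_mul_coordProj_eq_zero fun a ha b hb => ?_
    by_contra hKab
    have hKz := piKronecker_apply_ne_zero.mp hKab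
    have hLab : piKronecker L a b ≠ 0 := piKronecker_apply_ne_zero.mpr fun z hLz => hKz z <| by
      by_cases hz : z ∈ s
      · simp [hK, hz, eraseOffDiagRows_apply_eq_zero hLz]
      · simp [hK, hz, hLz]
    obtain ⟨z, hz, haz, hne⟩ := h a ha b hb hLab
    exact hKz z (by simp [hK, hz, eraseOffDiagRows_apply_of_mem haz hne])
  have hδ : ∀ z ∈ s, ‖L z - K z‖ ≤ √(N * ε) := fun z hz => by
    rw [hK, Finset.piecewise_eq_of_mem _ _ _ hz]
    refine Real.le_sqrt_of_sq_le ((norm_sub_eraseOffDiagRows_sq_le (hL z) (hε z hz)).trans ?_)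
    gcongr
    exact hA z hz
  calc ‖coordProj P' * piKronecker L * coordProj P‖
      = ‖coordProj P' * (piKronecker L - piKronecker K) * coordProj P‖ := by
        rw [mul_sub, sub_mul, hKzero, sub_zero]
    _ ≤ ‖piKronecker L - piKronecker K‖ := norm_coordProj_mul_mul_coordProj_le _ _ _
    _ ≤ s.card * √(N * ε) * Real.exp (s.card * √(N * ε)) :=
        norm_piKronecker_sub_le hL₁ (fun z hz => Finset.piecewise_eq_of_notMem _ _ _ hz) hδ
    _ ≤ s.card * √(N * ε) * Real.exp 1 := by
        gcongr
        exact (le_mul_of_one_le_right (by positivity) (Real.one_le_exp zero_le_one)).trans hsmall.le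

theorem norm_coordProj_mul_piKronecker_mul_coordProj_le_of_conserved
    (hL : ∀ z, L z ∈ unitary (Matrix o o ℂ)) {Γ : Type*} {c : (ι → o) → Γ}
    (hc : ∀ a b, piKronecker L a b ≠ 0 → c a = c b) {A : Γ → ι → Set o}
    (hA : ∀ b ∈ P, ∀ z ∈ s, (A (c b) z).ncard ≤ N) (hε₀ : 0 ≤ ε)
    (hε : ∀ γ, ∀ z ∈ s, ∀ i ∈ A γ z, 1 - ‖L z i i‖ ^ 2 ≤ ε)
    (h : ∀ a ∈ P', ∀ b ∈ P, piKronecker L a b ≠ 0 → ∃ z ∈ s, a z ∈ A (c b) z ∧ a z ≠ b z) :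
    ‖coordProj P' * piKronecker L * coordProj P‖ ≤ s.card * √(N * ε) * Real.exp 1 := by
  have hne {a b} (hab : (coordProj P' * piKronecker L * coordProj P) a b ≠ 0) :
      piKronecker L a b ≠ 0 := by
    classical
    rw [mul_coordProj_apply, Set.indicator_apply, coordProj_mul_apply, Set.indicator_apply] at hab
    exact (ite_ne_right_iff.mp (ite_ne_right_iff.mp hab).2).2
  refine l2_opNorm_le_of_forall_fiber (fun a b hab => hc a b (hne hab)) (by positivity) fun γ => ?_
  rw [← mul_assoc, ← mul_assoc, coordProj_mul_coordProj, mul_assoc, coordProj_mul_coordProj]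
  rcases (P ∩ c ⁻¹' {γ}).eq_empty_or_nonempty with hempty | ⟨b₀, hb₀, rfl⟩
  · rw [coordProj_mul_mul_coordProj_eq_zero (by simp [hempty]), norm_zero]
    positivity
  · refine norm_coordProj_mul_piKronecker_mul_coordProj_le hL (A := A (c b₀)) (hA b₀ hb₀) hε₀
      (hε (c b₀)) fun a ha b hb hab => ?_
    rw [← (show c b = c b₀ from hb.2)]
    exact h a ha.2 b hb.1 hab

end TransitionBound

section Compression

open Matrix

variable (Y : Type*) [Fintype Y]

/-- The difference of the uniform superposition of the basis vectors `some y` and of the basis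
vector `none`. -/
def compressionVector : Option Y → ℂ
  | none => -1
  | some _ => ((√(Fintype.card Y : ℝ))⁻¹ : ℝ)

variable {Y} in
theorem compressionVector_some_mul_self (y : Y) :
    compressionVector Y (some y) * compressionVector Y (some y) = (Fintype.card Y : ℂ)⁻¹ := by
  rw [compressionVector, ← Complex.ofReal_mul, ← mul_inv, Real.mul_self_sqrt (Nat.cast_nonneg _),
    Complex.ofReal_inv, Complex.ofReal_natCast]

theorem compressionVector_dotProduct_self [Nonempty Y] :
    compressionVector Y ⬝ᵥ compressionVector Y = 2 := by
  rw [dotProduct, Fintype.sum_option]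
  simp only [compressionVector_some_mul_self, Finset.sum_const, Finset.card_univ, nsmul_eq_mul]
  rw [mul_inv_cancel₀ (Nat.cast_ne_zero.mpr Fintype.card_ne_zero)]
  norm_num [compressionVector]

variable [DecidableEq Y]

/-- The local compression operator: the reflection exchanging the basis vector `none`, which stands
for a value of the oracle not yet asked for, with the uniform superposition of the vectors
`some y`. -/
def compression : Matrix (Option Y) (Option Y) ℂ :=
  1 - vecMulVec (compressionVector Y) (compressionVector Y)

theorem star_compression : star (compression Y) = compression Y := by
  have hstar : star (compressionVector Y) = compressionVector Y := by
    ext u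
    cases u <;> simp [compressionVector]
  rw [compression, star_sub, star_one, star_eq_conjTranspose, conjTranspose_vecMulVec, hstar]

variable {Y}

theorem compression_some_none (y : Y) :
    compression Y (some y) none = ((√(Fintype.card Y : ℝ))⁻¹ : ℝ) := by
  simp [compression, vecMulVec_apply, compressionVector]

theorem one_sub_norm_sq_compression_some_some_le (y : Y) :
    1 - ‖compression Y (some y) (some y)‖ ^ 2 ≤ 2 / (Fintype.card Y : ℝ) := by
  have hentry : compression Y (some y) (some y) = ((1 - (Fintype.card Y : ℝ)⁻¹ : ℝ) : ℂ) := by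
    simp [compression, vecMulVec_apply, compressionVector_some_mul_self]
  rw [hentry, Complex.norm_real, Real.norm_eq_abs, sq_abs, div_eq_mul_inv]
  nlinarith [sq_nonneg ((Fintype.card Y : ℝ)⁻¹)]

variable (Y) [Nonempty Y]

theorem compression_mul_self : compression Y * compression Y = 1 := by
  rw [compression, sub_mul, one_mul, mul_sub, mul_one, vecMulVec_mul_vecMulVec,
    compressionVector_dotProduct_self, vecMulVec_smul, ofNat_smul_eq_nsmul, two_nsmul]
  abel

theorem compression_mem_unitary : compression Y ∈ unitary (Matrix (Option Y) (Option Y) ℂ) := by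
  rw [Unitary.mem_iff, star_compression, compression_mul_self]
  exact ⟨rfl, rfl⟩

end Compression

section CompressedPhase

open Matrix

theorem norm_option_elim_one_eq_one {Y : Type*} {w : Y → ℂ} (hw : ∀ y, ‖w y‖ = 1) (u : Option Y) :
    ‖u.elim 1 w‖ = 1 := by
  cases u with
  | none => exact norm_one
  | some y => exact hw y

variable {Y : Type*} [Fintype Y] [DecidableEq Y]

/-- The diagonal phase `some y ↦ w y` on a database entry, acting trivially on `none` and conjugated
by the compression: the effect of a query on the compressed oracle in a Fourier mode. -/
def compressedPhase (w : Y → ℂ) : Matrix (Option Y) (Option Y) ℂ :=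
  compression Y * diagonal (fun u => u.elim 1 w) * compression Y

theorem one_sub_norm_sq_compressedPhase_some_some_le {w : Y → ℂ} (hw : ∀ y, ‖w y‖ = 1) (y : Y) :
    1 - ‖compressedPhase w (some y) (some y)‖ ^ 2 ≤ 8 / (Fintype.card Y : ℝ) := by
  have : Nonempty Y := ⟨y⟩
  have h := one_sub_norm_sq_conj_diagonal_apply_le (compression_mem_unitary Y)
    (norm_option_elim_one_eq_one hw) (some y)
  rw [star_compression] at h
  calc 1 - ‖compressedPhase w (some y) (some y)‖ ^ 2
      ≤ 4 * (1 - ‖compression Y (some y) (some y)‖ ^ 2) := h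
    _ ≤ 4 * (2 / (Fintype.card Y : ℝ)) := by
        gcongr
        exact one_sub_norm_sq_compression_some_some_le y
    _ = 8 / (Fintype.card Y : ℝ) := by ring

variable [Nonempty Y]

theorem compressedPhase_one : compressedPhase (1 : Y → ℂ) = 1 := by
  have hone : diagonal (fun u : Option Y => u.elim 1 (1 : Y → ℂ)) = 1 := by
    rw [← diagonal_one]
    congr 1
    ext u
    cases u <;> rfl
  rw [compressedPhase, hone, mul_one, compression_mul_self]

theorem compressedPhase_mem_unitary {w : Y → ℂ} (hw : ∀ y, ‖w y‖ = 1) :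
    compressedPhase w ∈ unitary (Matrix (Option Y) (Option Y) ℂ) :=
  mul_mem (mul_mem (compression_mem_unitary Y)
    (diagonal_mem_unitary (norm_option_elim_one_eq_one hw))) (compression_mem_unitary Y)

theorem piKronecker_compression_mul_piKronecker_compressedPhase {X : Type*} [Fintype X]
    [DecidableEq X] (w : X → Y → ℂ) :
    piKronecker (fun _ => compression Y) * piKronecker (fun z => compressedPhase (w z)) =
      diagonal (fun D : X → Option Y => ∏ z, (D z).elim 1 (w z)) *
        piKronecker fun _ => compression Y := by
  rw [piKronecker_mul, ← piKronecker_diagonal (fun z (u : Option Y) => u.elim 1 (w z)),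
    piKronecker_mul]
  congr 1
  ext1 z
  rw [Pi.mul_apply, Pi.mul_apply, compressedPhase, ← mul_assoc, ← mul_assoc,
    compression_mul_self, one_mul]

end CompressedPhase

section HashChain

variable {X Y : Type*} {rel : Y → X → Prop} {D D' : X → Option Y} {n : ℕ}

/-- The points `x 0, …, x n` form a chain of length `n` in the database `D`, a partial function
from `X` to `Y`: `D` is defined at `x i` and its value there is related to `x (i + 1)`. -/
def IsHashChain (rel : Y → X → Prop) (D : X → Option Y) (x : Fin (n + 1) → X) : Prop :=
  ∀ i : Fin n, ∃ y, D (x i.castSucc) = some y ∧ rel y (x i.succ)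

/-- The database `D` contains a chain of length `n`. -/
def HasHashChain (rel : Y → X → Prop) (n : ℕ) (D : X → Option Y) : Prop :=
  ∃ x : Fin (n + 1) → X, IsHashChain rel D x

theorem isHashChain_some_comp {H : X → Y} {x : Fin (n + 1) → X} :
    IsHashChain rel (fun z => some (H z)) x ↔ ∀ i : Fin n, rel (H (x i.castSucc)) (x i.succ) := by
  simp [IsHashChain]

theorem not_hasHashChain_succ_none : ¬HasHashChain rel (n + 1) fun _ => none := by
  rintro ⟨x, hx⟩
  obtain ⟨y, hy, -⟩ := hx 0
  cases hy

theorem IsHashChain.exists_apply_ne {x : Fin (n + 1) → X} (hx : IsHashChain rel D' x)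
    (hD : ¬HasHashChain rel n D) :
    ∃ (i : Fin n) (y : Y), D' (x i.castSucc) = some y ∧ rel y (x i.succ) ∧
      D' (x i.castSucc) ≠ D (x i.castSucc) := by
  have hDx : ¬IsHashChain rel D x := fun h => hD ⟨x, h⟩
  obtain ⟨i, hi⟩ := not_forall.mp hDx
  obtain ⟨y, hy, hrel⟩ := hx i
  exact ⟨i, y, hy, hrel, fun hne => hi ⟨y, hne ▸ hy, hrel⟩⟩

section ChainingValues

variable [Fintype X] {s : Finset X}

/-- The places at which the database `D` is defined. -/
def databaseSupport (D : X → Option Y) : Finset X := {z | (D z).isSome}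

theorem mem_databaseSupport {z : X} : z ∈ databaseSupport D ↔ (D z).isSome := by
  simp [databaseSupport]

variable [DecidableEq X]

theorem databaseSupport_piecewise_none_subset :
    databaseSupport (s.piecewise (fun _ => none) D) ⊆ databaseSupport D := by
  intro z
  by_cases hz : z ∈ s <;> simp [mem_databaseSupport, hz]

theorem databaseSupport_subset_union (h : ∀ z ∉ s, D' z = D z) :
    databaseSupport D' ⊆ s ∪ databaseSupport D := by
  intro z hz
  by_cases hzs : z ∈ s
  · exact Finset.mem_union_left _ hzs
  · exact Finset.mem_union_right _ (by rwa [mem_databaseSupport, ← h z hzs, ← mem_databaseSupport])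

/-- The values related to a point of `s` or to a point where the database `D` is defined: only such
a value, written at a place of `s`, can lengthen a chain. -/
def chainingValues (rel : Y → X → Prop) (s : Finset X) (D : X → Option Y) : Set Y :=
  ⋃ z ∈ s ∪ databaseSupport D, {y | rel y z}

theorem ncard_chainingValues_le {T : ℕ} (hT : ∀ a : X, {y : Y | rel y a}.ncard ≤ T) :
    (chainingValues rel s D).ncard ≤ (s.card + (databaseSupport D).card) * T :=
  calc (chainingValues rel s D).ncard
      ≤ ∑ z ∈ s ∪ databaseSupport D, {y | rel y z}.ncard := Finset.set_ncard_biUnion_le _ _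
    _ ≤ (s ∪ databaseSupport D).card * T := Finset.sum_le_card_nsmul _ _ _ fun z _ => hT z
    _ ≤ _ := Nat.mul_le_mul_right T (Finset.card_union_le _ _)

theorem HasHashChain.exists_mem_chainingValues (hD' : HasHashChain rel (n + 1) D')
    (hD : ¬HasHashChain rel n D) (h : ∀ z ∉ s, D' z = D z) :
    ∃ z ∈ s, (∃ y ∈ chainingValues rel s (s.piecewise (fun _ => none) D), D' z = some y) ∧
      D' z ≠ D z := by
  obtain ⟨x, hx⟩ := hD'
  have hinit : IsHashChain rel D' fun i : Fin (n + 1) => x i.castSucc := fun i => hx i.castSucc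
  obtain ⟨i, y, hy, hrel, hne⟩ := hinit.exists_apply_ne hD
  -- The next point of the chain is again a place where `D'` is defined.
  obtain ⟨y', hy', -⟩ := hx i.succ
  refine ⟨x i.castSucc.castSucc, by_contra fun hz => hne (h _ hz),
    ⟨y, Set.mem_biUnion (databaseSupport_subset_union (D' := D') (fun z hz => ?_) ?_) hrel, hy⟩,
    hne⟩
  · simp [hz, h z hz]
  · rw [mem_databaseSupport, hy', Option.isSome_some]

end ChainingValues

end HashChain

section HashChainTransition

open Matrix
open scoped Matrix.Norms.L2Operator

variable {X Y : Type*} [Fintype X] [Fintype Y] [DecidableEq Y] {rel : Y → X → Prop} {T : ℕ}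

theorem eq_of_piKronecker_compressedPhase_ne_zero [Nonempty Y] {s : Finset X} {w : X → Y → ℂ}
    (hs : ∀ z ∉ s, w z = 1) {D' D : X → Option Y}
    (h : piKronecker (fun z => compressedPhase (w z)) D' D ≠ 0) {z : X} (hz : z ∉ s) :
    D' z = D z := by
  have hentry := piKronecker_apply_ne_zero.mp h z
  rw [hs z hz, compressedPhase_one] at hentry
  exact by_contra fun hne => hentry (one_apply_ne hne)

variable [DecidableEq X]

theorem norm_coordProj_hasHashChain_mul_compressedPhase_le [Nonempty Y]
    (hT : ∀ a : X, {y : Y | rel y a}.ncard ≤ T) {s : Finset X} {w : X → Y → ℂ}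
    (hw : ∀ z y, ‖w z y‖ = 1) (hs : ∀ z ∉ s, w z = 1) {k : ℕ} (hk : s.card ≤ k) (m n : ℕ) :
    ‖coordProj {D | HasHashChain rel (n + 1) D} * piKronecker (fun z => compressedPhase (w z)) *
        coordProj {D | ¬HasHashChain rel n D ∧ (databaseSupport D).card ≤ m}‖ ≤
      k * √(((k + m) * T : ℕ) * (8 / (Fintype.card Y : ℝ))) * Real.exp 1 := by
  refine (norm_coordProj_mul_piKronecker_mul_coordProj_le_of_conserved
    (N := (k + m) * T) (s := s) (ε := 8 / Fintype.card Y)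
    (fun z => compressedPhase_mem_unitary (hw z))
    (c := fun D => s.piecewise (fun _ => none) D) (fun D' D h => ?_)
    (A := fun γ _ => some '' chainingValues rel s γ) (fun D hD z _ => ?_) (by positivity)
    (fun γ z _ => ?_) fun D' hD' D hD h => ?_).trans (by gcongr)
  · exact s.piecewise_congr (fun _ _ => rfl) fun z hz =>
      eq_of_piKronecker_compressedPhase_ne_zero hs h hz
  · rw [Set.ncard_image_of_injective _ (Option.some_injective Y)]
    refine (ncard_chainingValues_le hT).trans (Nat.mul_le_mul_right T (Nat.add_le_add hk ?_))
    exact (Finset.card_le_card databaseSupport_piecewise_none_subset).trans hD.2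
  · rintro _ ⟨y, -, rfl⟩
    exact one_sub_norm_sq_compressedPhase_some_some_le (hw z) y
  · obtain ⟨z, hz, ⟨y, hy, hyz⟩, hne⟩ := HasHashChain.exists_mem_chainingValues hD' hD.1
      fun z hz => eq_of_piKronecker_compressedPhase_ne_zero hs h hz
    exact ⟨z, hz, ⟨y, hy, hyz.symm⟩, hne⟩

theorem norm_coordProj_isHashChain_mul_compression_le [Nonempty Y]
    (hT : ∀ a : X, {y : Y | rel y a}.ncard ≤ T) {n : ℕ} (x : Fin (n + 1) → X) :
    ‖coordProj {D | IsHashChain rel D x} * piKronecker (fun _ => compression Y) *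
        coordProj {D | ¬HasHashChain rel n D}‖ ≤
      n * √(T * (2 / (Fintype.card Y : ℝ))) * Real.exp 1 := by
  set s : Finset X := Finset.univ.image fun i : Fin n => x i.castSucc
  have hcard : s.card ≤ n := Finset.card_image_le.trans_eq (Finset.card_fin n)
  refine (norm_coordProj_mul_piKronecker_mul_coordProj_le (N := T) (s := s)
    (ε := 2 / Fintype.card Y)
    (fun _ => compression_mem_unitary Y)
    (A := fun z => some '' {y | ∀ i : Fin n, x i.castSucc = z → rel y (x i.succ)})
    (fun z hz => ?_) (by positivity) (fun z _ => ?_) fun D' hD' D hD _ => ?_).trans (by gcongr)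
  · obtain ⟨i, -, hi⟩ := Finset.mem_image.mp hz
    rw [Set.ncard_image_of_injective _ (Option.some_injective Y)]
    have hsub : {y | ∀ j : Fin n, x j.castSucc = z → rel y (x j.succ)} ⊆ {y | rel y (x i.succ)} :=
      fun y hy => hy i hi
    exact (Set.ncard_le_ncard hsub).trans (hT (x i.succ))
  · rintro _ ⟨y, -, rfl⟩
    exact one_sub_norm_sq_compression_some_some_le y
  · obtain ⟨i, y, hy, -, hne⟩ := IsHashChain.exists_apply_ne hD' hD
    refine ⟨x i.castSucc, Finset.mem_image_of_mem _ (Finset.mem_univ i),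
      ⟨y, fun j hj => ?_, hy.symm⟩, hne⟩
    obtain ⟨y', hy', hrel⟩ := hD' j
    rw [hj, hy, Option.some_inj] at hy'
    exact hy' ▸ hrel

end HashChainTransition

section JointState

open Matrix
open scoped Matrix.Norms.L2Operator

variable {m V β : Type*} [Fintype m] [NormedAddCommGroup V] [InnerProductSpace ℂ V] [Fintype β]
  {P : Set m} {c : ℝ}

/-- The action of a matrix on the register `m` of a family of vectors of `V`, regarded as a joint
state of that register and of a system with state space `V`. -/
def matrixAction (K : Matrix m m ℂ) : PiLp 2 (fun _ : m => V) →ₗ[ℂ] PiLp 2 (fun _ : m => V) where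
  toFun Φ := WithLp.toLp 2 fun a => ∑ a', K a a' • Φ a'
  map_add' Φ Ψ := by ext a; simp [smul_add, Finset.sum_add_distrib]
  map_smul' r Φ := by ext a; simp [Finset.smul_sum, smul_comm r]

theorem matrixAction_apply (K : Matrix m m ℂ) (Φ : PiLp 2 fun _ : m => V) (a : m) :
    matrixAction K Φ a = ∑ a', K a a' • Φ a' := rfl

theorem matrixAction_map (K : Matrix m m ℂ) (U : V →L[ℂ] V) (Φ : PiLp 2 fun _ : m => V) :
    matrixAction K (WithLp.toLp 2 fun a => U (Φ a)) =
      WithLp.toLp 2 fun a => U (matrixAction K Φ a) := by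
  ext a
  simp [matrixAction_apply]

theorem norm_toLp_map_le {U : V →L[ℂ] V} (hU : ‖U‖ ≤ 1) (Φ : PiLp 2 fun _ : m => V) :
    ‖(WithLp.toLp 2 fun a => U (Φ a) : PiLp 2 fun _ : m => V)‖ ≤ ‖Φ‖ := by
  rw [← sq_le_sq₀ (norm_nonneg _) (norm_nonneg _), PiLp.norm_sq_eq_of_L2, PiLp.norm_sq_eq_of_L2]
  gcongr with a
  exact (U.le_of_opNorm_le hU _).trans_eq (one_mul _)

theorem matrixAction_coordProj_apply [DecidableEq m] (Φ : PiLp 2 fun _ : m => V) (a : m) :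
    matrixAction (coordProj P) Φ a = P.indicator (fun a => Φ a) a := by
  classical
  simp [matrixAction_apply, coordProj, diagonal_apply, Set.indicator_apply]

theorem norm_matrixAction_coordProj_le [DecidableEq m] (P : Set m) (Φ : PiLp 2 fun _ : m => V) :
    ‖matrixAction (coordProj P) Φ‖ ≤ ‖Φ‖ := by
  rw [← sq_le_sq₀ (norm_nonneg _) (norm_nonneg _), PiLp.norm_sq_eq_of_L2, PiLp.norm_sq_eq_of_L2]
  gcongr with a
  rw [matrixAction_coordProj_apply]
  exact norm_indicator_le_norm_self _ a

theorem matrixAction_coordProj_eq_self [DecidableEq m] {Φ : PiLp 2 fun _ : m => V}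
    (hΦ : ∀ a, Φ a ≠ 0 → a ∈ P) : matrixAction (coordProj P) Φ = Φ := by
  ext1 a
  rw [matrixAction_coordProj_apply, Set.indicator_apply_eq_self]
  exact fun ha => by_contra fun h => ha (hΦ a h)

theorem matrixAction_coordProj_add_compl [DecidableEq m] (Φ : PiLp 2 fun _ : m => V) :
    matrixAction (coordProj P) Φ + matrixAction (coordProj Pᶜ) Φ = Φ := by
  ext1 a
  simp only [PiLp.add_apply, matrixAction_coordProj_apply]
  exact Set.indicator_self_add_compl_apply P _ a

/-- The operator on joint states that, on the basis vector `f b` of the second system, acts on the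
register by the matrix `A b`. -/
def controlledAction (f : OrthonormalBasis β ℂ V) (A : β → Matrix m m ℂ) :
    PiLp 2 (fun _ : m => V) →ₗ[ℂ] PiLp 2 (fun _ : m => V) where
  toFun Φ := WithLp.toLp 2 fun a => ∑ b, (A b *ᵥ fun a' => f.repr (Φ a') b) a • f b
  map_add' Φ Ψ := by
    ext a
    simp [← Pi.add_def, mulVec_add, add_smul, Finset.sum_add_distrib]
  map_smul' r Φ := by
    ext a
    have hrepr b : (fun a' => f.repr (r • Φ a') b) = r • fun a' => f.repr (Φ a') b := by
      ext
      simp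
    simp only [PiLp.smul_apply, hrepr, mulVec_smul, Pi.smul_apply, smul_assoc, Finset.smul_sum,
      RingHom.id_apply]

variable (f : OrthonormalBasis β ℂ V) {A B : β → Matrix m m ℂ} (Φ : PiLp 2 fun _ : m => V)

theorem repr_controlledAction_apply (a : m) (b : β) :
    f.repr (controlledAction f A Φ a) b = (A b *ᵥ fun a' => f.repr (Φ a') b) a := by
  classical
  simp [controlledAction, Pi.single_apply]

theorem controlledAction_mul :
    controlledAction f (fun b => A b * B b) Φ =
      controlledAction f A (controlledAction f B Φ) := by
  ext1 a
  refine f.repr.injective (PiLp.ext fun b => ?_)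
  simp only [repr_controlledAction_apply, ← mulVec_mulVec]

theorem controlledAction_const (K : Matrix m m ℂ) :
    controlledAction f (fun _ => K) Φ = matrixAction K Φ := by
  ext1 a
  refine f.repr.injective (PiLp.ext fun b => ?_)
  simp [repr_controlledAction_apply, matrixAction_apply, mulVec, dotProduct]

theorem matrixAction_controlledAction (K : Matrix m m ℂ) :
    matrixAction K (controlledAction f A Φ) = controlledAction f (fun b => K * A b) Φ := by
  rw [← controlledAction_const f, ← controlledAction_mul]

theorem controlledAction_matrixAction (K : Matrix m m ℂ) :
    controlledAction f A (matrixAction K Φ) = controlledAction f (fun b => A b * K) Φ := by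
  rw [← controlledAction_const f, ← controlledAction_mul]

theorem norm_sq_eq_sum_norm_sq_repr :
    ‖Φ‖ ^ 2 = ∑ b, ∑ a, ‖f.repr (Φ a) b‖ ^ 2 := by
  rw [PiLp.norm_sq_eq_of_L2, Finset.sum_comm]
  simp only [← EuclideanSpace.norm_sq_eq, f.repr.norm_map]

theorem norm_controlledAction_le [DecidableEq m] (hc : 0 ≤ c) (hA : ∀ b, ‖A b‖ ≤ c) :
    ‖controlledAction f A Φ‖ ≤ c * ‖Φ‖ := by
  rw [← sq_le_sq₀ (norm_nonneg _) (by positivity), mul_pow, norm_sq_eq_sum_norm_sq_repr f,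
    norm_sq_eq_sum_norm_sq_repr f, Finset.mul_sum]
  simp only [repr_controlledAction_apply]
  exact Finset.sum_le_sum fun b _ => (l2_opNorm_le_iff_sum_norm_sq_mulVec_le hc).mp (hA b) _

variable {Φ} in
theorem exists_apply_ne_zero_of_controlledAction_apply_ne_zero {a : m}
    (h : controlledAction f A Φ a ≠ 0) : ∃ b a', A b a a' ≠ 0 ∧ Φ a' ≠ 0 := by
  contrapose! h
  refine Finset.sum_eq_zero fun b _ => ?_
  rw [mulVec, dotProduct, Finset.sum_eq_zero fun a' _ => ?_, zero_smul]
  by_cases hA : A b a a' = 0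
  · rw [hA, zero_mul]
  · simp [h b a' hA]

end JointState

section CompressedOracle

open Matrix
open scoped Matrix.Norms.L2Operator

/-- An orthonormal basis in which all the oracles `O H` are diagonal, the eigenvalue of `O H` at the
vector `basis b` being a product of phases `phase b z (H z)` that are trivial for `z` outside a set
of at most `k` places. The Fourier basis is one for the `k`-parallel oracle. -/
structure QueryEigenbasis {X Y V : Type*} [Fintype X] [NormedAddCommGroup V]
    [InnerProductSpace ℂ V] (O : (X → Y) → V →L[ℂ] V) (k : ℕ) (β : Type*) [Fintype β] where
  basis : OrthonormalBasis β ℂ V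
  places : β → Finset X
  phase : β → X → Y → ℂ
  card_places_le b : (places b).card ≤ k
  norm_phase b z y : ‖phase b z y‖ = 1
  phase_eq_one b : ∀ z ∉ places b, phase b z = 1
  apply_basis H b : O H (basis b) = (∏ z, phase b z (H z)) • basis b

namespace QueryEigenbasis

variable {X Y V β : Type*} [Fintype X] [NormedAddCommGroup V] [InnerProductSpace ℂ V] [Fintype β]
  {O : (X → Y) → V →L[ℂ] V} {k : ℕ} (S : QueryEigenbasis O k β)

theorem oracle_apply (H : X → Y) (v : V) :
    O H v = ∑ b, ((∏ z, S.phase b z (H z)) * S.basis.repr v b) • S.basis b := by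
  conv_lhs => rw [← S.basis.sum_repr v, map_sum]
  simp only [map_smul, S.apply_basis, smul_smul, mul_comm]

variable [Fintype Y] [DecidableEq Y] [DecidableEq X]

/-- A query to the compressed oracle, whose register holds a database `X → Option Y`: the query to
the uncompressed oracle, conjugated by the compression at every place. -/
def compressedQuery : PiLp 2 (fun _ : X → Option Y => V) →ₗ[ℂ] PiLp 2 (fun _ : X → Option Y => V) :=
  controlledAction S.basis fun b => piKronecker fun z => compressedPhase (S.phase b z)

/-- The joint state of the algorithm and of the compressed oracle after `n` queries; the database
is initially empty. -/
def compressedState (U : ℕ → V →L[ℂ] V) (ψ : V) : ℕ → PiLp 2 (fun _ : X → Option Y => V)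
  | 0 => PiLp.single 2 (fun _ => none) (U 0 ψ)
  | n + 1 => WithLp.toLp 2 fun D => U (n + 1) (S.compressedQuery (compressedState U ψ n) D)

variable [Nonempty Y]

theorem matrixAction_compression_compressedQuery_apply
    (Φ : PiLp 2 fun _ : X → Option Y => V) (H : X → Y) :
    matrixAction (piKronecker fun _ => compression Y) (S.compressedQuery Φ) (fun z => some (H z)) =
      O H (matrixAction (piKronecker fun _ => compression Y) Φ fun z => some (H z)) := by
  rw [compressedQuery, matrixAction_controlledAction]
  simp only [piKronecker_compression_mul_piKronecker_compressedPhase]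
  rw [controlledAction_mul, controlledAction_const, S.oracle_apply]
  simp [controlledAction, mulVec_diagonal]

theorem matrixAction_compression_compressedState_apply (U : ℕ → V →L[ℂ] V) (ψ : V)
    (H : X → Y) (n : ℕ) :
    matrixAction (piKronecker fun _ => compression Y) (S.compressedState U ψ n)
        (fun z => some (H z)) =
      (((√(Fintype.card Y : ℝ))⁻¹ ^ Fintype.card X : ℝ) : ℂ) • runOp U (O H) n ψ := by
  induction n with
  | zero =>
    rw [matrixAction_apply, Finset.sum_eq_single fun _ => none]
    · simp [compressedState, piKronecker_apply, compression_some_none, runOp]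
    · intro D _ hD
      simp [compressedState, hD]
    · simp
  | succ n ih =>
    rw [compressedState, matrixAction_map, PiLp.toLp_apply,
      S.matrixAction_compression_compressedQuery_apply, ih, map_smul, map_smul]
    rfl

variable {U : ℕ → V →L[ℂ] V} {ψ : V} {n m T : ℕ} {rel : Y → X → Prop}
  {Φ : PiLp 2 fun _ : X → Option Y => V}

theorem card_databaseSupport_le_of_compressedQuery_ne_zero
    (hΦ : ∀ D, Φ D ≠ 0 → (databaseSupport D).card ≤ m) {D : X → Option Y}
    (hD : S.compressedQuery Φ D ≠ 0) : (databaseSupport D).card ≤ k + m := by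
  obtain ⟨b, D', hmat, hne⟩ := exists_apply_ne_zero_of_controlledAction_apply_ne_zero _ hD
  calc (databaseSupport D).card
      ≤ (S.places b ∪ databaseSupport D').card :=
        Finset.card_le_card <| databaseSupport_subset_union fun z hz =>
          eq_of_piKronecker_compressedPhase_ne_zero (S.phase_eq_one b) hmat hz
    _ ≤ (S.places b).card + (databaseSupport D').card := Finset.card_union_le _ _
    _ ≤ k + m := Nat.add_le_add (S.card_places_le b) (hΦ D' hne)

theorem card_databaseSupport_le_of_compressedState_ne_zero {D : X → Option Y}
    (hD : S.compressedState U ψ n D ≠ 0) : (databaseSupport D).card ≤ n * k := by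
  induction n generalizing D with
  | zero =>
    have hempty : D = fun _ => none := by_contra fun h => hD (by simp [compressedState, h])
    simp [hempty, databaseSupport]
  | succ n ih =>
    refine (S.card_databaseSupport_le_of_compressedQuery_ne_zero (fun D => ih) (D := D)
      fun h => hD ?_).trans_eq (by ring)
    simp [compressedState, h]

theorem norm_piKronecker_compressedPhase_le_one (b : β) :
    ‖piKronecker fun z => compressedPhase (S.phase b z)‖ ≤ 1 :=
  norm_piKronecker_le_one fun z =>
    norm_le_one_of_mem_unitary (compressedPhase_mem_unitary (S.norm_phase b z))

theorem norm_compressedQuery_le (Φ : PiLp 2 fun _ : X → Option Y => V) :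
    ‖S.compressedQuery Φ‖ ≤ ‖Φ‖ :=
  (norm_controlledAction_le _ _ zero_le_one S.norm_piKronecker_compressedPhase_le_one).trans_eq
    (one_mul _)

theorem norm_compressedState_le (hU : ∀ i ≤ n, ‖U i‖ ≤ 1) : ‖S.compressedState U ψ n‖ ≤ ‖ψ‖ := by
  induction n with
  | zero =>
    rw [compressedState, PiLp.norm_single]
    exact ((U 0).le_of_opNorm_le (hU 0 le_rfl) ψ).trans_eq (one_mul _)
  | succ n ih =>
    exact (norm_toLp_map_le (hU _ le_rfl) _).trans <|
      (S.norm_compressedQuery_le _).trans <| ih fun i hi => hU i (hi.trans n.le_succ)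

theorem norm_coordProj_hasHashChain_compressedQuery_le_of_not_hasHashChain
    (hT : ∀ a : X, {y : Y | rel y a}.ncard ≤ T)
    (hΦ : ∀ D, Φ D ≠ 0 → ¬HasHashChain rel n D ∧ (databaseSupport D).card ≤ m) :
    ‖matrixAction (coordProj {D | HasHashChain rel (n + 1) D}) (S.compressedQuery Φ)‖ ≤
      k * √(((k + m) * T : ℕ) * (8 / (Fintype.card Y : ℝ))) * Real.exp 1 * ‖Φ‖ := by
  nth_rw 1 [← matrixAction_coordProj_eq_self hΦ]
  rw [compressedQuery, controlledAction_matrixAction, matrixAction_controlledAction]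
  simp only [← mul_assoc]
  exact norm_controlledAction_le _ _ (by positivity) fun b =>
    norm_coordProj_hasHashChain_mul_compressedPhase_le hT (S.norm_phase b) (S.phase_eq_one b)
      (S.card_places_le b) m n

theorem norm_coordProj_hasHashChain_compressedQuery_le (hT : ∀ a : X, {y : Y | rel y a}.ncard ≤ T)
    (hΦ : ∀ D, Φ D ≠ 0 → (databaseSupport D).card ≤ m) :
    ‖matrixAction (coordProj {D | HasHashChain rel (n + 1) D}) (S.compressedQuery Φ)‖ ≤
      ‖matrixAction (coordProj {D | HasHashChain rel n D}) Φ‖ +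
        k * √(((k + m) * T : ℕ) * (8 / (Fintype.card Y : ℝ))) * Real.exp 1 * ‖Φ‖ := by
  set P : Set (X → Option Y) := {D | HasHashChain rel n D}
  set P' : Set (X → Option Y) := {D | HasHashChain rel (n + 1) D}
  have hsupp : ∀ D, matrixAction (coordProj Pᶜ) Φ D ≠ 0 →
      ¬HasHashChain rel n D ∧ (databaseSupport D).card ≤ m := fun D hD => by
    rw [matrixAction_coordProj_apply, Set.indicator_apply_ne_zero] at hD
    exact ⟨hD.1, hΦ D hD.2⟩
  calc ‖matrixAction (coordProj P') (S.compressedQuery Φ)‖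
      = ‖matrixAction (coordProj P') (S.compressedQuery (matrixAction (coordProj P) Φ)) +
          matrixAction (coordProj P') (S.compressedQuery (matrixAction (coordProj Pᶜ) Φ))‖ := by
        rw [← map_add, ← map_add, matrixAction_coordProj_add_compl]
    _ ≤ ‖matrixAction (coordProj P) Φ‖ +
          k * √(((k + m) * T : ℕ) * (8 / (Fintype.card Y : ℝ))) * Real.exp 1 *
            ‖matrixAction (coordProj Pᶜ) Φ‖ :=
        norm_add_le_of_le
          ((norm_matrixAction_coordProj_le _ _).trans (S.norm_compressedQuery_le _))
          (S.norm_coordProj_hasHashChain_compressedQuery_le_of_not_hasHashChain hT hsupp)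
    _ ≤ _ := by
        gcongr
        exact norm_matrixAction_coordProj_le _ _

theorem norm_coordProj_hasHashChain_compressedState_le
    (hT : ∀ a : X, {y : Y | rel y a}.ncard ≤ T) (hU : ∀ i ≤ n, ‖U i‖ ≤ 1) (hψ : ‖ψ‖ ≤ 1) :
    ‖matrixAction (coordProj {D | HasHashChain rel (n + 1) D}) (S.compressedState U ψ n)‖ ≤
      n * (k * √((n * k * T : ℕ) * (8 / (Fintype.card Y : ℝ))) * Real.exp 1) := by
  induction n with
  | zero =>
    have hzero : matrixAction (coordProj {D | HasHashChain rel (0 + 1) D})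
        (S.compressedState U ψ 0) = 0 := by
      ext1 D
      rw [matrixAction_coordProj_apply]
      refine Set.indicator_apply_eq_zero.mpr fun hD => ?_
      have hne : D ≠ fun _ => none := fun h => not_hasHashChain_succ_none (h ▸ hD)
      simp [compressedState, hne]
    simp [hzero]
  | succ n ih =>
    have hU' : ∀ i ≤ n, ‖U i‖ ≤ 1 := fun i hi => hU i (hi.trans n.le_succ)
    calc ‖matrixAction (coordProj {D | HasHashChain rel (n + 1 + 1) D})
          (S.compressedState U ψ (n + 1))‖
        ≤ ‖matrixAction (coordProj {D | HasHashChain rel (n + 1 + 1) D})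
            (S.compressedQuery (S.compressedState U ψ n))‖ := by
          rw [compressedState, matrixAction_map]
          exact norm_toLp_map_le (hU _ le_rfl) _
      _ ≤ _ := S.norm_coordProj_hasHashChain_compressedQuery_le hT
        fun D => S.card_databaseSupport_le_of_compressedState_ne_zero
      _ ≤ n * (k * √((n * k * T : ℕ) * (8 / (Fintype.card Y : ℝ))) * Real.exp 1) +
          k * √(((k + n * k) * T : ℕ) * (8 / (Fintype.card Y : ℝ))) * Real.exp 1 * 1 := by
        gcongr
        · exact ih hU'
        · exact (S.norm_compressedState_le hU').trans hψ
      _ ≤ (n + 1 : ℕ) *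
          (k * √(((n + 1) * k * T : ℕ) * (8 / (Fintype.card Y : ℝ))) * Real.exp 1) := by
        rw [mul_one, add_comm k, ← Nat.succ_mul, Nat.cast_succ, add_one_mul (n : ℝ)]
        gcongr
        exact n.le_succ

end QueryEigenbasis

end CompressedOracle

section FourierBasis

variable {ι G Z : Type*} [DecidableEq ι] [AddCommGroup G] [Fintype G] [DecidableEq G]
  [DecidableEq Z]

/-- The Fourier basis vector of the mode `b = (x, χ, w)`: the normalized complex conjugate of the
character `χ` in the group register, between the basis states `x` and `w` of the other two
registers. Shifting the group register by `g` multiplies it by `χ g`. -/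
def fourierVector (b : ι × AddChar G ℂ × Z) : EuclideanSpace ℂ (ι × G × Z) :=
  ((√(Fintype.card G : ℝ) : ℝ) : ℂ)⁻¹ • ∑ y, b.2.1 (-y) • EuclideanSpace.single (b.1, y, b.2.2) 1

theorem apply_fourierVector_of_shift
    {O : EuclideanSpace ℂ (ι × G × Z) →L[ℂ] EuclideanSpace ℂ (ι × G × Z)} {g : ι → G}
    (hO : ∀ x y w, O (EuclideanSpace.single (x, y, w) 1) = EuclideanSpace.single (x, y + g x, w) 1)
    (b : ι × AddChar G ℂ × Z) : O (fourierVector b) = b.2.1 (g b.1) • fourierVector b := by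
  have hshift : ∑ y, b.2.1 (-y) • EuclideanSpace.single (b.1, y + g b.1, b.2.2) (1 : ℂ) =
      b.2.1 (g b.1) • ∑ y, b.2.1 (-y) • EuclideanSpace.single (b.1, y, b.2.2) (1 : ℂ) := by
    rw [Finset.smul_sum]
    refine Fintype.sum_equiv (Equiv.addRight (g b.1)) _ _ fun y => ?_
    rw [Equiv.coe_addRight, smul_smul, ← AddChar.map_add_eq_mul, neg_add_rev,
      add_neg_cancel_left]
  rw [fourierVector, map_smul, map_sum, smul_comm (b.2.1 (g b.1)), ← hshift]
  simp only [map_smul, hO]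

theorem fourierVector_apply (b : ι × AddChar G ℂ × Z) (x : ι) (y : G) (w : Z) :
    fourierVector b (x, y, w) =
      if x = b.1 ∧ w = b.2.2 then ((√(Fintype.card G : ℝ) : ℝ) : ℂ)⁻¹ * b.2.1 (-y) else 0 := by
  simp only [fourierVector, PiLp.smul_apply, WithLp.ofLp_sum, Finset.sum_apply, smul_eq_mul,
    PiLp.single_apply, Prod.mk.injEq]
  rw [Finset.sum_eq_single y]
  · by_cases h : x = b.1 ∧ w = b.2.2 <;> simp [h]
  · intro y' _ hy
    simp [hy.symm]
  · simp

variable [Fintype ι] [Fintype Z]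

theorem inner_fourierVector (b b' : ι × AddChar G ℂ × Z) :
    inner ℂ (fourierVector b) (fourierVector b') =
      if b.1 = b'.1 ∧ b.2.2 = b'.2.2 then
        (Fintype.card G : ℂ)⁻¹ * ∑ y, (b.2.1 - b'.2.1) y else 0 := by
  have hsq : ((√(Fintype.card G : ℝ) : ℝ) : ℂ)⁻¹ * ((√(Fintype.card G : ℝ) : ℝ) : ℂ)⁻¹ =
      (Fintype.card G : ℂ)⁻¹ := by
    rw [← mul_inv, ← Complex.ofReal_mul, Real.mul_self_sqrt (Nat.cast_nonneg _),
      Complex.ofReal_natCast]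
  conv_lhs => rw [fourierVector]
  simp only [inner_smul_left, sum_inner, EuclideanSpace.inner_single_left, fourierVector_apply,
    map_inv₀, Complex.conj_ofReal, map_one, one_mul, AddChar.map_neg_eq_conj, Complex.conj_conj]
  split_ifs with h
  · rw [← hsq, Finset.mul_sum, Finset.mul_sum]
    refine Fintype.sum_congr _ _ fun y => ?_
    rw [AddChar.sub_apply, AddChar.map_neg_eq_conj]
    ring
  · simp

theorem orthonormal_fourierVector :
    Orthonormal ℂ (fourierVector : ι × AddChar G ℂ × Z → EuclideanSpace ℂ (ι × G × Z)) := by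
  classical
  rw [orthonormal_iff_ite]
  rintro ⟨x, χ, w⟩ ⟨x', χ', w'⟩
  rw [inner_fourierVector, AddChar.sum_eq_ite]
  by_cases hχ : χ = χ' <;> simp [hχ, sub_eq_zero]

/-- The `fourierVector`s, as an orthonormal basis. -/
def groupFourierBasis (ι G Z : Type*) [DecidableEq ι] [AddCommGroup G] [Fintype G] [DecidableEq G]
    [DecidableEq Z] [Fintype ι] [Fintype Z] :
    OrthonormalBasis (ι × AddChar G ℂ × Z) ℂ (EuclideanSpace ℂ (ι × G × Z)) :=
  .mk orthonormal_fourierVector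
    (orthonormal_fourierVector.linearIndependent.span_eq_top_of_card_eq_finrank' (by simp)).ge

theorem groupFourierBasis_apply (b : ι × AddChar G ℂ × Z) :
    groupFourierBasis ι G Z b = fourierVector b := by
  rw [groupFourierBasis, OrthonormalBasis.coe_mk]

end FourierBasis

section ParallelOracle

theorem addChar_map_sum_eq_prod {α A M : Type*} [AddCommMonoid A] [CommMonoid M]
    (χ : AddChar A M) (f : α → A) (s : Finset α) : χ (∑ i ∈ s, f i) = ∏ i ∈ s, χ (f i) := by
  have h := map_prod χ.toMonoidHom (fun i => Multiplicative.ofAdd (f i)) s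
  rwa [← ofAdd_sum] at h

variable {X Y Z : Type*} [Fintype X] [DecidableEq X] [AddCommGroup Y] [Fintype Y] [DecidableEq Y]
  [Fintype Z] [DecidableEq Z] {k : ℕ}
  {O : (X → Y) → EuclideanSpace ℂ ((Fin k → X) × (Fin k → Y) × Z) →L[ℂ]
    EuclideanSpace ℂ ((Fin k → X) × (Fin k → Y) × Z)}

/-- The Fourier basis as an eigenbasis of the `k`-parallel oracle: the mode `(x, χ, w)` reads off
the product of the phases that `χ` gives to the answers at the `k` places `x i`. -/
def parallelQueryEigenbasis
    (hO : ∀ (H : X → Y) (x : Fin k → X) (y : Fin k → Y) (w : Z),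
      O H (EuclideanSpace.single (x, y, w) 1) =
        EuclideanSpace.single (x, fun i => y i + H (x i), w) 1) :
    QueryEigenbasis O k ((Fin k → X) × AddChar (Fin k → Y) ℂ × Z) where
  basis := groupFourierBasis (Fin k → X) (Fin k → Y) Z
  places b := Finset.univ.image b.1
  phase b z y := b.2.1 fun i => if b.1 i = z then y else 0
  card_places_le b := Finset.card_image_le.trans_eq (Finset.card_fin k)
  norm_phase b z y := b.2.1.norm_apply _
  phase_eq_one b z hz := by
    have hne i : b.1 i ≠ z := fun h => hz (Finset.mem_image.mpr ⟨i, Finset.mem_univ i, h⟩)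
    ext y
    simp only [hne, if_false, Pi.one_apply]
    exact b.2.1.map_zero_eq_one
  apply_basis H b := by
    have hsum : ∑ z, (fun i => if b.1 i = z then H z else 0) = fun i => H (b.1 i) := by
      ext i
      simp [Finset.sum_apply]
    rw [groupFourierBasis_apply, ← addChar_map_sum_eq_prod, hsum]
    exact apply_fourierVector_of_shift (g := fun x i => H (x i)) (hO H) b

end ParallelOracle

section Readout

open Matrix
open scoped Matrix.Norms.L2Operator

variable {X Y V β B : Type*} [Fintype X] [DecidableEq X] [Fintype Y] [DecidableEq Y]
  [NormedAddCommGroup V] [InnerProductSpace ℂ V] [Fintype β] [Fintype B]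
  {O : (X → Y) → V →L[ℂ] V} {k : ℕ}

/-- The operator that decompresses the database and, when the algorithm reads off `b`, projects it
to the databases in which `out b` is a chain. -/
def chainReadout (rel : Y → X → Prop) {m : ℕ} (e : OrthonormalBasis B ℂ V)
    (out : B → Fin (m + 1) → X) :
    PiLp 2 (fun _ : X → Option Y => V) →ₗ[ℂ] PiLp 2 (fun _ : X → Option Y => V) :=
  controlledAction e fun b =>
    coordProj {D | IsHashChain rel D (out b)} * piKronecker fun _ => compression Y

variable {rel : Y → X → Prop} {m T : ℕ} {e : OrthonormalBasis B ℂ V} {out : B → Fin (m + 1) → X}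

open Classical in
theorem repr_chainReadout_apply (Φ : PiLp 2 fun _ : X → Option Y => V) (H : X → Y) (b : B) :
    e.repr (chainReadout rel e out Φ fun z => some (H z)) b =
      if ∀ i : Fin m, rel (H (out b i.castSucc)) (out b i.succ) then
        e.repr (matrixAction (piKronecker fun _ => compression Y) Φ fun z => some (H z)) b
      else 0 := by
  rw [← controlledAction_const e, chainReadout, repr_controlledAction_apply,
    repr_controlledAction_apply, ← mulVec_mulVec, coordProj_mulVec, Set.indicator_apply]
  simp only [Set.mem_ofPred_eq, isHashChain_some_comp]

variable [Nonempty Y]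

theorem norm_chainReadout_le (Φ : PiLp 2 fun _ : X → Option Y => V) :
    ‖chainReadout rel e out Φ‖ ≤ ‖Φ‖ :=
  (norm_controlledAction_le _ _ zero_le_one fun _ => (norm_mul_le_of_le
    (norm_coordProj_le_one _) (norm_piKronecker_le_one fun _ =>
      norm_le_one_of_mem_unitary (compression_mem_unitary Y))).trans_eq (one_mul 1)).trans_eq
    (one_mul _)

theorem norm_chainReadout_coordProj_not_hasHashChain_le
    (hT : ∀ a : X, {y : Y | rel y a}.ncard ≤ T) (Φ : PiLp 2 fun _ : X → Option Y => V) :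
    ‖chainReadout rel e out (matrixAction (coordProj {D | ¬HasHashChain rel m D}) Φ)‖ ≤
      m * √(T * (2 / (Fintype.card Y : ℝ))) * Real.exp 1 * ‖Φ‖ := by
  rw [chainReadout, controlledAction_matrixAction]
  exact norm_controlledAction_le _ _ (by positivity) fun b =>
    norm_coordProj_isHashChain_mul_compression_le hT (out b)

open Classical in
theorem QueryEigenbasis.sum_norm_sq_inner_runOp_le (S : QueryEigenbasis O k β) (U : ℕ → V →L[ℂ] V)
    (ψ : V) (n : ℕ) :
    (∑ H : X → Y, ∑ b, if ∀ i : Fin m, rel (H (out b i.castSucc)) (out b i.succ)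
      then ‖inner ℂ (e b) (runOp U (O H) n ψ)‖ ^ 2 else 0) /
        (Fintype.card Y : ℝ) ^ Fintype.card X ≤
      ‖chainReadout rel e out (S.compressedState U ψ n)‖ ^ 2 := by
  have hinj : Function.Injective fun (H : X → Y) z => some (H z) :=
    fun H H' h => funext fun z => Option.some.inj (congrFun h z)
  have hscale : ‖(((√(Fintype.card Y : ℝ))⁻¹ ^ Fintype.card X : ℝ) : ℂ)‖ ^ 2 =
      ((Fintype.card Y : ℝ) ^ Fintype.card X)⁻¹ := by
    rw [Complex.norm_real, Real.norm_eq_abs, sq_abs, ← pow_mul, mul_comm, pow_mul, inv_pow,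
      Real.sq_sqrt (Nat.cast_nonneg _), inv_pow]
  calc _ = ∑ H : X → Y, ∑ b, ‖e.repr (chainReadout rel e out (S.compressedState U ψ n)
          fun z => some (H z)) b‖ ^ 2 := by
        simp only [Finset.sum_div]
        refine Fintype.sum_congr _ _ fun H => Fintype.sum_congr _ _ fun b => ?_
        rw [repr_chainReadout_apply, S.matrixAction_compression_compressedState_apply]
        split_ifs
        · rw [map_smul, PiLp.smul_apply, e.repr_apply_apply, norm_smul, mul_pow, hscale,
            div_eq_inv_mul]
        · simp
    _ ≤ ∑ D : X → Option Y, ∑ b,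
          ‖e.repr (chainReadout rel e out (S.compressedState U ψ n) D) b‖ ^ 2 := by
        refine (Finset.sum_map Finset.univ ⟨_, hinj⟩ fun D => ∑ b,
          ‖e.repr (chainReadout rel e out (S.compressedState U ψ n) D) b‖ ^ 2).symm.trans_le ?_
        exact Finset.sum_le_univ_sum_of_nonneg fun D => by positivity
    _ = ‖chainReadout rel e out (S.compressedState U ψ n)‖ ^ 2 := by
        rw [norm_sq_eq_sum_norm_sq_repr e, Finset.sum_comm]

theorem QueryEigenbasis.norm_chainReadout_compressedState_le (S : QueryEigenbasis O k β)
    {U : ℕ → V →L[ℂ] V} {ψ : V} {n : ℕ} {out : B → Fin (n + 1 + 1) → X}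
    (hT : ∀ a : X, {y : Y | rel y a}.ncard ≤ T) (hU : ∀ i ≤ n, ‖U i‖ ≤ 1) (hψ : ‖ψ‖ ≤ 1) :
    ‖chainReadout rel e out (S.compressedState U ψ n)‖ ≤
      n * (k * √((n * k * T : ℕ) * (8 / (Fintype.card Y : ℝ))) * Real.exp 1) +
        (n + 1 : ℕ) * √(T * (2 / (Fintype.card Y : ℝ))) * Real.exp 1 := by
  rw [← matrixAction_coordProj_add_compl (P := {D | HasHashChain rel (n + 1) D})
    (S.compressedState U ψ n), map_add]
  exact norm_add_le_of_le
    ((norm_chainReadout_le _).trans (S.norm_coordProj_hasHashChain_compressedState_le hT hU hψ)) <|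
    (norm_chainReadout_coordProj_not_hasHashChain_le hT _).trans <|
      mul_le_of_le_one_right (by positivity) ((S.norm_compressedState_le hU).trans hψ)

end Readout

open Classical in
theorem stmt_16_general {X Y V β B : Type*} [Fintype X] [DecidableEq X] [Fintype Y] [Nonempty Y]
    [NormedAddCommGroup V] [InnerProductSpace ℂ V] [Fintype β] [Fintype B]
    {rel : Y → X → Prop} {T : ℕ} (hT : ∀ a : X, {y : Y | rel y a}.ncard ≤ T) {k q : ℕ}
    {O : (X → Y) → V →L[ℂ] V} (S : QueryEigenbasis O k β) (e : OrthonormalBasis B ℂ V)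
    {U : ℕ → V →L[ℂ] V} (hU : ∀ i ≤ q, ‖U i‖ ≤ 1) {ψ : V} (hψ : ‖ψ‖ ≤ 1)
    (out : B → Fin (q + 2) → X) :
    (∑ H : X → Y, ∑ b, if ∀ i : Fin (q + 1), rel (H (out b i.castSucc)) (out b i.succ)
      then ‖inner ℂ (e b) (runOp U (O H) q ψ)‖ ^ 2 else 0) /
        (Fintype.card Y : ℝ) ^ Fintype.card X ≤
      (q * k * Real.exp 1 * √(8 * q * k * T / Fintype.card Y) +
        Real.exp 1 * (q + 1) * √(2 * T / Fintype.card Y)) ^ 2 := by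
  refine (S.sum_norm_sq_inner_runOp_le U ψ q).trans <| pow_le_pow_left₀ (norm_nonneg _)
    ((S.norm_chainReadout_compressedState_le hT hU hψ).trans_eq ?_) 2
  push_cast
  ring_nf

theorem sharp_chain_bound_le (q k T M : ℕ) :
    (q * k * Real.exp 1 * √(8 * q * k * T / M) + Real.exp 1 * (q + 1) * √(2 * T / M)) ^ 2 ≤
      (q * k * Real.exp 1 * √(10 * q * k * T / M) +
        Real.exp 1 * (q + 2) * √(10 * T * (q + 2) / M) + √((q + 2) / M)) ^ 2 := by
  have hlast : (2 * T : ℝ) ≤ 10 * T * (q + 2) := by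
    nlinarith [show (0 : ℝ) ≤ T * q by positivity]
  refine pow_le_pow_left₀ (by positivity)
    (le_add_of_le_of_nonneg (add_le_add ?_ ?_) (Real.sqrt_nonneg _)) 2
  · gcongr
    norm_num
  · gcongr Real.exp 1 * (q + ?_) * √(?_ / _)
    norm_num

open Classical in
theorem stmt_16 {X Y : Type*} [Fintype X] [DecidableEq X] [Nonempty X]
    [Fintype Y] [DecidableEq Y] [AddCommGroup Y]
    -- the relation `◁` and the bound `T` with `|{y : y ◁ x}| ≤ T` for all `x`
    (rel : Y → X → Prop) (T : ℕ) (hT : ∀ a : X, {y : Y | rel y a}.ncard ≤ T)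
    (k q : ℕ) (hk : 1 ≤ k) (hq : 1 ≤ q)
    -- a `k`-parallel `q`-query quantum oracle algorithm `(d, ψ₀, U_0, …, U_q)`
    (d : ℕ) (hd : 1 ≤ d)
    (ψ0 : EuclideanSpace ℂ ((Fin k → X) × (Fin k → Y) × Fin d)) (hψ0 : ‖ψ0‖ = 1)
    (U : ℕ → (EuclideanSpace ℂ ((Fin k → X) × (Fin k → Y) × Fin d) →L[ℂ]
              EuclideanSpace ℂ ((Fin k → X) × (Fin k → Y) × Fin d)))
    (hU : ∀ i ≤ q,
      U i ∈ unitary (EuclideanSpace ℂ ((Fin k → X) × (Fin k → Y) × Fin d) →L[ℂ]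
        EuclideanSpace ℂ ((Fin k → X) × (Fin k → Y) × Fin d)))
    -- the oracle unitary `O_H`, permuting the basis by `(x, y, w) ↦ (x, y + H(x), w)`
    (O : (X → Y) → (EuclideanSpace ℂ ((Fin k → X) × (Fin k → Y) × Fin d) →L[ℂ]
        EuclideanSpace ℂ ((Fin k → X) × (Fin k → Y) × Fin d)))
    (hO : ∀ (H : X → Y) (x : Fin k → X) (y : Fin k → Y) (wr : Fin d),
      O H (EuclideanSpace.single (x, y, wr) 1) =
        EuclideanSpace.single (x, fun i => y i + H (x i), wr) 1)
    -- an arbitrary readout function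
    (out : ((Fin k → X) × (Fin k → Y) × Fin d) → Fin (q + 2) → X) :
    -- the success probability `p` of producing a `(q+1)`-chain ...
    (∑ H : X → Y, ∑ b : (Fin k → X) × (Fin k → Y) × Fin d,
        if ∀ i : Fin (q + 1), rel (H (out b i.castSucc)) (out b i.succ)
        then ‖inner (𝕜 := ℂ) (EuclideanSpace.single b 1) (runOp U (O H) q ψ0)‖ ^ 2
        else 0) / (Fintype.card Y : ℝ) ^ (Fintype.card X)
      -- ... is bounded as claimed
      ≤ (q * k * Real.exp 1 * Real.sqrt (10 * q * k * T / Fintype.card Y) +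
          Real.exp 1 * (q + 2) * Real.sqrt (10 * T * (q + 2) / Fintype.card Y) +
          Real.sqrt ((q + 2) / Fintype.card Y)) ^ 2 := by
  simpa only [EuclideanSpace.basisFun_apply] using (stmt_16_general hT (parallelQueryEigenbasis hO)
    (EuclideanSpace.basisFun _ ℂ) (fun i hi => norm_le_one_of_mem_unitary (hU i hi)) hψ0.le
    out).trans (sharp_chain_bound_le q k T (Fintype.card Y))

end
end
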